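/- arXiv:1912.12896 — 4 statements merged into one kernel-verified Lean document; each statement's English description precedes it below -/
import Mathlib

section
/- Let a̲, ā > 0. Let p : ℝ → ℝ be continuous on [0,∞), twice differentiable on (0,∞), with p(0) = 0 and p'(ρ) > 0 for every ρ > 0. Let P : ℝ → ℝ be continuous on [0,∞), differentiable on (0,∞), with P(0) = 0, P(ρ) ≥ 0 for all ρ ≥ 0, and P'(ρ)·ρ − P(ρ) = p(ρ) for all ρ > 0. Assume that ρ ↦ P(ρ) − a̲·p(ρ) and ρ ↦ ā·p(ρ) − P(ρ) are convex on (0,∞). Then there exist constants a > 0 and γ > 1 such that P(ρ) ≥ a·ρ^γ for all ρ ≥ 1. -/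
/-!
Convexity of `ab * p - P` says `ab * p'' ≥ P''`, and differentiating `P' ρ = (P + p) / ρ` gives
`P'' = p' / ρ`. With `k = 1 / ab` this reads `p'' ≥ k p' / ρ`, i.e. `p' ρ ^ (-k)` is nondecreasing,
so `p' ≥ p'(1) ρ ^ k` on `[1, ∞)`. Integrating once, `p ≥ c ρ ^ (1 + k)` for some `c > 0`.
Finally `(P / ρ)' = p / ρ ^ 2 ≥ c ρ ^ (k - 1)`, and integrating again gives
`P / ρ ≥ a ρ ^ k`, so that `γ = 1 + k` works. The value `P 1`, needed as a starting point for the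
last integration, is positive: otherwise `1` would minimize `P`, giving `p 1 = P' 1 - P 1 = 0`.
-/

lemma le_of_hasDerivAt_nonneg_Ici {f f' : ℝ → ℝ} (hf : ∀ x ≥ (1 : ℝ), HasDerivAt f (f' x) x)
    (hf' : ∀ x ≥ (1 : ℝ), 0 ≤ f' x) {x : ℝ} (hx : 1 ≤ x) : f 1 ≤ f x := by
  have hmono : MonotoneOn f (Set.Ici 1) := by
    apply monotoneOn_of_deriv_nonneg (convex_Ici 1)
    · exact fun y hy => (hf y hy).continuousAt.continuousWithinAt
    · intro y hy
      exact (hf y (interior_subset hy)).differentiableAt.differentiableWithinAt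
    · intro y hy
      rw [(hf y (interior_subset hy)).deriv]
      exact hf' y (interior_subset hy)
  exact hmono (Set.mem_Ici.2 le_rfl) hx hx

/-- The differential form `p' / ρ ≤ ab * p''` of the convexity of `ab * p - P`, where the relation
between `p` and `P` has been used to write `P'' = p' / ρ`. -/
lemma deriv_div_le_of_convexOn {ab : ℝ} {p P : ℝ → ℝ}
    (hp_diff : ∀ ρ > (0:ℝ), DifferentiableAt ℝ p ρ)
    (hp_diff2 : ∀ ρ > (0:ℝ), DifferentiableAt ℝ (deriv p) ρ)
    (hP_diff : ∀ ρ > (0:ℝ), DifferentiableAt ℝ P ρ)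
    (hPp : ∀ ρ > (0:ℝ), deriv P ρ * ρ - P ρ = p ρ)
    (hconv2 : ConvexOn ℝ (Set.Ioi 0) (fun ρ => ab * p ρ - P ρ)) {x : ℝ} (hx : 0 < x) :
    deriv p x / x ≤ ab * deriv (deriv p) x := by
  have hder : ∀ y > (0:ℝ), HasDerivAt (fun ρ => ab * p ρ - P ρ)
      (ab * deriv p y - deriv P y) y := fun y hy =>
    ((hp_diff y hy).hasDerivAt.const_mul ab).sub (hP_diff y hy).hasDerivAt
  have hmono : MonotoneOn (fun y => ab * deriv p y - (P y + p y) / y) (Set.Ioi 0) := by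
    refine (hconv2.monotoneOn_deriv fun y hy => (hder y hy).differentiableAt).congr ?_
    intro y hy
    have hy' : (0:ℝ) < y := hy
    have h := hPp y hy'
    have : deriv P y = (P y + p y) / y := by
      field_simp
      linarith
    simp only [(hder y hy').deriv, this]
  have hd : HasDerivAt (fun y => ab * deriv p y - (P y + p y) / y)
      (ab * deriv (deriv p) x - ((deriv P x + deriv p x) * x - (P x + p x) * 1) / x ^ 2) x :=
    ((hp_diff2 x hx).hasDerivAt.const_mul ab).sub
      (((hP_diff x hx).hasDerivAt.add (hp_diff x hx).hasDerivAt).div (hasDerivAt_id x) hx.ne')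
  have h0 := hmono.derivWithin_nonneg (x := x)
  rw [derivWithin_of_isOpen isOpen_Ioi hx, hd.deriv] at h0
  have h1 : ((deriv P x + deriv p x) * x - (P x + p x) * 1) / x ^ 2 = deriv p x / x := by
    have := hPp x hx
    field_simp
    linarith
  linarith


/-- coercivity of the pressure potential under the structural hypotheses (S2). -/
theorem stmt_1 (al ab : ℝ) (hal : 0 < al) (hab : 0 < ab) (p P : ℝ → ℝ)
    (hp_cont : ContinuousOn p (Set.Ici 0))
    (hp_diff : ∀ ρ > (0:ℝ), DifferentiableAt ℝ p ρ)
    (hp_diff2 : ∀ ρ > (0:ℝ), DifferentiableAt ℝ (deriv p) ρ)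
    (hp0 : p 0 = 0)
    (hp' : ∀ ρ > (0:ℝ), 0 < deriv p ρ)
    (hP_cont : ContinuousOn P (Set.Ici 0))
    (hP_diff : ∀ ρ > (0:ℝ), DifferentiableAt ℝ P ρ)
    (hP0 : P 0 = 0)
    (hPnn : ∀ ρ ≥ (0:ℝ), 0 ≤ P ρ)
    (hPp : ∀ ρ > (0:ℝ), deriv P ρ * ρ - P ρ = p ρ)
    (hconv1 : ConvexOn ℝ (Set.Ioi 0) (fun ρ => P ρ - al * p ρ))
    (hconv2 : ConvexOn ℝ (Set.Ioi 0) (fun ρ => ab * p ρ - P ρ)) :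
    ∃ a > (0:ℝ), ∃ γ > (1:ℝ), ∀ ρ ≥ (1:ℝ), a * ρ ^ γ ≤ P ρ := by

  have hp1 : 0 < p 1 := by
    have hmono : StrictMonoOn p (Set.Ici 0) := by
      apply strictMonoOn_of_deriv_pos (convex_Ici 0) hp_cont
      intro x hx
      rw [interior_Ici] at hx
      exact hp' x hx
    have := hmono (Set.mem_Ici.2 le_rfl) (Set.mem_Ici.2 zero_le_one) zero_lt_one
    rwa [hp0] at this
  have hP1 : 0 < P 1 := by
    refine lt_of_le_of_ne (hPnn 1 zero_le_one) fun h => ?_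
    have hmin : IsLocalMin P 1 := by
      filter_upwards [lt_mem_nhds (zero_lt_one (α := ℝ))] with y hy
      rw [← h]
      exact hPnn y hy.le
    have := hPp 1 one_pos
    rw [hmin.deriv_eq_zero, ← h] at this
    linarith
  obtain ⟨k, hk, hkab⟩ : ∃ k : ℝ, 0 < k ∧ k * ab = 1 :=
    ⟨ab⁻¹, inv_pos.2 hab, inv_mul_cancel₀ hab.ne'⟩
  have hpow (r : ℝ) {x : ℝ} (hx : 1 ≤ x) :
      HasDerivAt (fun y : ℝ => y ^ r) (r * x ^ (r - 1)) x :=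
    Real.hasDerivAt_rpow_const (Or.inl (by linarith))
  have hp'_lower : ∀ x ≥ (1:ℝ), deriv p 1 * x ^ k ≤ deriv p x := by
    intro x hx
    have h := le_of_hasDerivAt_nonneg_Ici (f := fun y => deriv p y * y ^ (-k))
      (fun y hy => (hp_diff2 y (by linarith)).hasDerivAt.mul (hpow (-k) hy)) (fun y hy => by
        have hy0 : 0 < y := by linarith
        have h1 := deriv_div_le_of_convexOn hp_diff hp_diff2 hP_diff hPp hconv2 hy0
        have h2 : k * (deriv p y / y) ≤ deriv (deriv p) y := by
          calc k * (deriv p y / y) ≤ k * (ab * deriv (deriv p) y) := by gcongr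
            _ = deriv (deriv p) y := by rw [← mul_assoc, hkab, one_mul]
        have h3 : y ^ (-k - 1) = y ^ (-k) / y := Real.rpow_sub_one hy0.ne' _
        have h4 : 0 ≤ (deriv (deriv p) y - k * (deriv p y / y)) * y ^ (-k) :=
          mul_nonneg (by linarith) (Real.rpow_nonneg hy0.le _)
        rw [h3]
        calc _ ≤ _ := h4
          _ = _ := by ring) hx
    have hx0 : 0 < x := by linarith
    simp only [Real.one_rpow, mul_one, Real.rpow_neg hx0.le] at h
    rwa [← div_eq_mul_inv, le_div_iff₀ (Real.rpow_pos_of_pos hx0 k)] at h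
  obtain ⟨c, hc, hcp, hcp'⟩ : ∃ c > (0:ℝ), c ≤ p 1 ∧ c * (1 + k) ≤ deriv p 1 :=
    ⟨min (p 1) (deriv p 1 / (1 + k)), lt_min hp1 (div_pos (hp' 1 one_pos) (by linarith)),
      min_le_left _ _, (le_div_iff₀ (by linarith)).1 (min_le_right _ _)⟩
  have hp_lower : ∀ x ≥ (1:ℝ), c * x ^ (1 + k) ≤ p x := by
    intro x hx
    have h := le_of_hasDerivAt_nonneg_Ici (f := fun y => p y - c * y ^ (1 + k))
      (fun y hy => (hp_diff y (by linarith)).hasDerivAt.sub ((hpow (1 + k) hy).const_mul c))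
      (fun y hy => by
        have h1 := hp'_lower y hy
        have h2 : c * (1 + k) * y ^ k ≤ deriv p 1 * y ^ k :=
          mul_le_mul_of_nonneg_right hcp' (Real.rpow_nonneg (by linarith) _)
        rw [add_sub_cancel_left]
        linarith) hx
    simp only [Real.one_rpow, mul_one] at h
    linarith
  obtain ⟨a, ha, haP, hac⟩ : ∃ a > (0:ℝ), a ≤ P 1 ∧ a * k ≤ c :=
    ⟨min (P 1) (c / k), lt_min hP1 (div_pos hc hk),
      min_le_left _ _, (le_div_iff₀ hk).1 (min_le_right _ _)⟩
  refine ⟨a, ha, 1 + k, by linarith, fun x hx => ?_⟩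
  have h := le_of_hasDerivAt_nonneg_Ici (f := fun y => P y / y - a * y ^ k)
    (fun y hy => ((hP_diff y (by linarith)).hasDerivAt.div (hasDerivAt_id y)
      (by simp only [id]; linarith)).sub ((hpow k hy).const_mul a))
    (fun y hy => by
      have hy0 : 0 < y := by linarith
      have h1 := hp_lower y hy
      have h2 : y ^ (1 + k) = y ^ (k - 1) * y ^ 2 := by
        rw [← Real.rpow_natCast y 2, ← Real.rpow_add hy0]
        congr 1
        push_cast
        ring
      have h3 : c * y ^ (k - 1) ≤ p y / y ^ 2 := by
        rw [le_div_iff₀ (by positivity), mul_assoc, ← h2]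
        exact h1
      have h4 : a * k * y ^ (k - 1) ≤ c * y ^ (k - 1) :=
        mul_le_mul_of_nonneg_right hac (Real.rpow_nonneg hy0.le _)
      simp only [id, mul_one, hPp y hy0]
      linarith) hx
  have hx0 : 0 < x := by linarith
  simp only [Real.one_rpow, mul_one, div_one] at h
  have h5 : a * x ^ k ≤ P x / x := by linarith
  rw [le_div_iff₀ hx0] at h5
  rw [Real.rpow_add hx0, Real.rpow_one]
  linarith
end

section
/- Let a̲, ā > 0 and let p, P : ℝ → ℝ be continuous functions such that P is convex on [0,∞) and the functions P − a̲·p and ā·p − P are convex on [0,∞). Let ν be a Borel probability measure on ℝ with ν((−∞,0)) = 0 such that p, P and the identity function are ν-integrable, and set ρ̄ := ∫ x dν(x). Then 0 ≤ a̲·(∫ p dν − p(ρ̄)) ≤ ∫ P dν − P(ρ̄) ≤ ā·(∫ p dν − p(ρ̄)). -/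
open MeasureTheory

/-! The Jensen gap `g ↦ ∫ g dν - g (∫ x dν)` is linear in `g` and nonnegative when `g` is convex on
`[0,∞)`. Nonnegativity for `P - a̲·p` and `ā·p - P` gives the two upper bounds; nonnegativity for `P`
together with the last bound and `ā > 0` makes the gap of `p` nonnegative. -/

/-- comparison of the Jensen gaps of `p` and `P` when `P - a̲·p` and `ā·p - P`
are convex, for a probability measure supported in `[0,∞)`. -/
theorem stmt_12 (al ab : ℝ) (hal : 0 < al) (hab : 0 < ab) (p P : ℝ → ℝ)
    (hp : Continuous p) (hP : Continuous P)
    (hPconv : ConvexOn ℝ (Set.Ici 0) P)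
    (hconv1 : ConvexOn ℝ (Set.Ici 0) (fun x => P x - al * p x))
    (hconv2 : ConvexOn ℝ (Set.Ici 0) (fun x => ab * p x - P x))
    (ν : Measure ℝ) [IsProbabilityMeasure ν] (hsupp : ν (Set.Iio 0) = 0)
    (hip : Integrable p ν) (hiP : Integrable P ν)
    (hiid : Integrable (fun x => x) ν) :
    0 ≤ al * ((∫ x, p x ∂ν) - p (∫ x, x ∂ν)) ∧
      al * ((∫ x, p x ∂ν) - p (∫ x, x ∂ν)) ≤ (∫ x, P x ∂ν) - P (∫ x, x ∂ν) ∧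
      (∫ x, P x ∂ν) - P (∫ x, x ∂ν) ≤ ab * ((∫ x, p x ∂ν) - p (∫ x, x ∂ν)) := by
  have hs : ∀ᵐ x ∂ν, x ∈ Set.Ici (0 : ℝ) := by
    rw [ae_iff]
    simpa [Set.Iio] using hsupp
  have jensen : ∀ g : ℝ → ℝ, ConvexOn ℝ (Set.Ici 0) g → Continuous g → Integrable g ν →
      g (∫ x, x ∂ν) ≤ ∫ x, g x ∂ν := fun g hg hc hi =>
    hg.map_integral_le hc.continuousOn isClosed_Ici hs hiid hi
  have h0 := jensen P hPconv hP hiP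
  have h1 := jensen _ hconv1 (by fun_prop) (hiP.sub (hip.const_mul al))
  have h2 := jensen _ hconv2 (by fun_prop) ((hip.const_mul ab).sub hiP)
  rw [integral_sub hiP (hip.const_mul al), integral_const_mul] at h1
  rw [integral_sub (hip.const_mul ab) hiP, integral_const_mul] at h2
  have hgap : 0 ≤ (∫ x, p x ∂ν) - p (∫ x, x ∂ν) :=
    nonneg_of_mul_nonneg_right (by linarith : 0 ≤ ab * ((∫ x, p x ∂ν) - p (∫ x, x ∂ν))) hab
  exact ⟨mul_nonneg hal.le hgap, by linarith, by linarith⟩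
end

section
/- For every dimension d ≥ 1 there exists a constant χ_d > 0 with the following property: for every bounded open set Ω ⊂ ℝ^d of positive Lebesgue measure |Ω|, every Young function A (i.e., A : [0,∞) → [0,∞) convex, increasing, with A(0) = 0), and every continuously differentiable function w : ℝ^d → ℝ with compact support contained in Ω, one has ∫_Ω A( (χ_d/(d·|Ω|^{1/d}))·|w(x)| ) dx ≤ (1/d)·∫_Ω A( ‖∇w(x)‖ ) dx. -/
/-!
The proof bounds `w` by the Riesz potential of its gradient and then applies Jensen's inequality
to the kernel.

Write `σ` for the area of the unit sphere, `n` for the dimension and `R = |Ω| ^ (1 / n)`.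
Integrating the derivative of `w` along every ray issued from `x` and averaging over the directions
gives, in polar coordinates, `σ |w x| ≤ ∫ ‖∇w y‖ ‖x - y‖ ^ (1 - n) dy`
(`enorm_le_rieszPotential`). Splitting the kernel at distance `R` shows that its integral over `Ω`
is at most `(σ + 1) R` (`setLIntegral_rieszKernel_le`), with no hypothesis on the shape of `Ω`.

With `χ = σ / (σ + 1)` the multiple `k` of the kernel for which
`χ / (n R) |w x| ≤ ∫_Ω ‖∇w y‖ k (x - y) dy` has integral at most `1 / n ≤ 1` in either variable.
Jensen's inequality for measures of mass at most one (`young_jensen`, which uses `A 0 = 0`) gives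
`A (χ / (n R) |w x|) ≤ ∫_Ω A ‖∇w y‖ k (x - y) dy`; integrating in `x` and exchanging the integrals
yields the factor `1 / n`.
-/

open MeasureTheory

open Set Metric Module
open scoped ENNReal

/-- A convex function on `[0, ∞)` has a supporting line at every interior point. -/
lemma exists_supporting_slope {A : ℝ → ℝ} (hA : ConvexOn ℝ (Ici 0) A) {t₀ : ℝ} (ht₀ : 0 < t₀) :
    ∃ m : ℝ, ∀ t, 0 ≤ t → A t₀ + m * (t - t₀) ≤ A t := by
  have key : ∀ s, 0 ≤ s → s < t₀ → ∀ t, t₀ < t →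
      (A t₀ - A s) / (t₀ - s) ≤ (A t - A t₀) / (t - t₀) := fun s hs hst t ht =>
    hA.slope_mono_adjacent (mem_Ici.2 hs) (mem_Ici.2 (ht₀.le.trans ht.le)) hst ht
  set S : Set ℝ := (fun s => (A t₀ - A s) / (t₀ - s)) '' Ico 0 t₀ with hS
  have hne : S.Nonempty := ⟨_, 0, ⟨le_rfl, ht₀⟩, rfl⟩
  have hub : ∀ t, t₀ < t → (A t - A t₀) / (t - t₀) ∈ upperBounds S := by
    rintro t ht _ ⟨s, hs, rfl⟩
    exact key s hs.1 hs.2 t ht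
  refine ⟨sSup S, fun t ht => ?_⟩
  rcases lt_trichotomy t t₀ with h | h | h
  · have h1 : (A t₀ - A t) / (t₀ - t) ≤ sSup S :=
      le_csSup ⟨_, hub (t₀ + 1) (by linarith)⟩ ⟨t, ⟨ht, h⟩, rfl⟩
    rw [div_le_iff₀ (by linarith)] at h1
    linarith
  · simp [h]
  · have h1 : sSup S ≤ (A t - A t₀) / (t - t₀) := csSup_le hne (hub t h)
    rw [le_div_iff₀ (by linarith)] at h1
    linarith

/-- Jensen's inequality for a Young function and a measure of total mass at most one: the
supporting line at `t₀` has nonpositive value at `0`, so missing mass only helps. -/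
lemma young_jensen {α : Type*} [MeasurableSpace α] {ν : Measure α} (hν : ν univ ≤ 1)
    {A : ℝ → ℝ} (hA : ConvexOn ℝ (Ici 0) A) (hmono : Monotone A) (hA0 : A 0 = 0)
    {f : α → ℝ} (hf : Measurable f) (hf0 : ∀ a, 0 ≤ f a) {t₀ : ℝ} (ht₀ : 0 ≤ t₀)
    (h : ENNReal.ofReal t₀ ≤ ∫⁻ a, ENNReal.ofReal (f a) ∂ν) :
    ENNReal.ofReal (A t₀) ≤ ∫⁻ a, ENNReal.ofReal (A (f a)) ∂ν := by
  rcases ht₀.eq_or_lt with rfl | ht₀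
  · simp [hA0]
  obtain ⟨m, hm⟩ := exists_supporting_slope hA ht₀
  have hAnn : ∀ t, 0 ≤ t → 0 ≤ A t := fun t ht => hA0 ▸ hmono ht
  have hb : 0 ≤ m * t₀ - A t₀ := by have := hm 0 le_rfl; rw [hA0] at this; linarith
  have hm0 : 0 ≤ m := by
    have := hAnn t₀ ht₀.le
    by_contra! hneg
    nlinarith
  have h1 : ENNReal.ofReal m * ENNReal.ofReal t₀ ≤
      ∫⁻ a, ENNReal.ofReal (A (f a)) ∂ν + ENNReal.ofReal (m * t₀ - A t₀) := by
    calc ENNReal.ofReal m * ENNReal.ofReal t₀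
        ≤ ENNReal.ofReal m * ∫⁻ a, ENNReal.ofReal (f a) ∂ν := by gcongr
      _ = ∫⁻ a, ENNReal.ofReal m * ENNReal.ofReal (f a) ∂ν :=
          (lintegral_const_mul _ hf.ennreal_ofReal).symm
      _ ≤ ∫⁻ a, (ENNReal.ofReal (A (f a)) + ENNReal.ofReal (m * t₀ - A t₀)) ∂ν := by
          refine lintegral_mono fun a => ?_
          rw [← ENNReal.ofReal_mul hm0, ← ENNReal.ofReal_add (hAnn _ (hf0 a)) hb]
          exact ENNReal.ofReal_le_ofReal (by linarith [hm (f a) (hf0 a)])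
      _ = ∫⁻ a, ENNReal.ofReal (A (f a)) ∂ν + ENNReal.ofReal (m * t₀ - A t₀) * ν univ := by
          rw [lintegral_add_right _ measurable_const, lintegral_const]
      _ ≤ _ := by gcongr; exact mul_le_of_le_one_right' hν
  have h2 : ENNReal.ofReal m * ENNReal.ofReal t₀ =
      ENNReal.ofReal (A t₀) + ENNReal.ofReal (m * t₀ - A t₀) := by
    rw [← ENNReal.ofReal_mul hm0, ← ENNReal.ofReal_add (hAnn _ ht₀.le) hb]
    congr 1; ring
  rw [h2] at h1
  exact (ENNReal.add_le_add_iff_right ENNReal.ofReal_ne_top).1 h1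

set_option linter.unusedSectionVars false

section Polar

variable {E : Type*} [NormedAddCommGroup E] [NormedSpace ℝ E] [FiniteDimensional ℝ E]
  [Nontrivial E] [MeasurableSpace E] [BorelSpace E] (μ : Measure E) [μ.IsAddHaarMeasure]

/-- Integration in polar coordinates for `ℝ≥0∞`-valued functions. -/
lemma lintegral_polar {f : E → ℝ≥0∞} (hf : Measurable f) :
    ∫⁻ z, f z ∂μ = ∫⁻ θ : sphere (0 : E) 1, (∫⁻ r in Ioi (0 : ℝ),
      ENNReal.ofReal (r ^ (finrank ℝ E - 1)) * f (r • (θ : E))) ∂μ.toSphere := by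
  have hmp := μ.measurePreserving_homeomorphUnitSphereProd
  have hsm : Measurable fun p : sphere (0 : E) 1 × Ioi (0 : ℝ) => f ((p.2 : ℝ) • (p.1 : E)) := by
    apply hf.comp; fun_prop
  calc ∫⁻ z, f z ∂μ = ∫⁻ z : ({(0)}ᶜ : Set E), f z.1 ∂(μ.comap (↑)) := by
        rw [lintegral_subtype_comap (measurableSet_singleton _).compl,
          restrict_compl_singleton]
    _ = ∫⁻ p, f ((p.2 : ℝ) • (p.1 : E))
          ∂(μ.toSphere.prod (Measure.volumeIoiPow (finrank ℝ E - 1))) := by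
        rw [← hmp.lintegral_comp hsm]
        refine lintegral_congr fun z => ?_
        have hz : ‖(z : E)‖ ≠ 0 := norm_ne_zero_iff.2 z.2
        simp [smul_smul, hz]
    _ = ∫⁻ θ : sphere (0 : E) 1, (∫⁻ r : Ioi (0 : ℝ), f ((r : ℝ) • (θ : E))
          ∂(Measure.volumeIoiPow (finrank ℝ E - 1))) ∂μ.toSphere :=
        lintegral_prod _ hsm.aemeasurable
    _ = _ := by
        refine lintegral_congr fun θ => ?_
        have hfθ : Measurable fun r : Ioi (0 : ℝ) => f ((r : ℝ) • (θ : E)) :=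
          hf.comp (by fun_prop)
        rw [Measure.volumeIoiPow, lintegral_withDensity_eq_lintegral_mul _ (by fun_prop) hfθ]
        exact lintegral_subtype_comap measurableSet_Ioi
          (fun r : ℝ => ENNReal.ofReal (r ^ (finrank ℝ E - 1)) * f (r • (θ : E)))

/-- The Riesz kernel `‖z‖ ^ (1 - n)`, `n` the dimension, with values in `[0, ∞]`
(for `n ≥ 2` it is `∞` at the origin). -/
noncomputable def rieszKernel (z : E) : ℝ≥0∞ := (ENNReal.ofReal (‖z‖ ^ (finrank ℝ E - 1)))⁻¹

lemma measurable_rieszKernel : Measurable (rieszKernel : E → ℝ≥0∞) := by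
  unfold rieszKernel; fun_prop

/-- In polar coordinates the Riesz kernel cancels the Jacobian. -/
lemma lintegral_mul_rieszKernel {f : E → ℝ≥0∞} (hf : Measurable f) :
    ∫⁻ z, f z * rieszKernel z ∂μ =
      ∫⁻ θ : sphere (0 : E) 1, (∫⁻ r in Ioi (0 : ℝ), f (r • (θ : E))) ∂μ.toSphere := by
  refine (lintegral_polar μ (hf.mul measurable_rieszKernel)).trans ?_
  refine lintegral_congr fun θ => setLIntegral_congr_fun measurableSet_Ioi fun r hr => ?_
  have hr : 0 < r := hr
  have hp : ENNReal.ofReal (r ^ (finrank ℝ E - 1)) ≠ 0 := by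
    simpa using pow_pos hr _
  have hθ : ‖r • (θ : E)‖ = r := by simp [norm_smul, hr.le]
  change ENNReal.ofReal (r ^ (finrank ℝ E - 1)) *
    (f (r • (θ : E)) * (ENNReal.ofReal (‖r • (θ : E)‖ ^ (finrank ℝ E - 1)))⁻¹) = f (r • (θ : E))
  rw [hθ, mul_left_comm, ENNReal.mul_inv_cancel hp ENNReal.ofReal_ne_top, mul_one]

/-- Integrating the derivative along a ray. -/
lemma enorm_le_lintegral_ray {w : E → ℝ} (hw : ContDiff ℝ 1 w) (hc : HasCompactSupport w)
    (x : E) (θ : sphere (0 : E) 1) :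
    ‖w x‖ₑ ≤ ∫⁻ r in Ioi (0 : ℝ), ‖fderiv ℝ w (x - r • (θ : E))‖ₑ := by
  have hθ : ‖(θ : E)‖ = 1 := by simp
  have hiso : Isometry fun t : ℝ => x + t • (θ : E) := by
    refine Isometry.of_dist_eq fun s t => ?_
    simp [dist_eq_norm, ← sub_smul, norm_smul]
  have h1 : ContDiff ℝ 1 fun t : ℝ => w (x + t • (θ : E)) := hw.comp (by fun_prop)
  have h2 : HasCompactSupport fun t : ℝ => w (x + t • (θ : E)) :=
    hc.comp_isClosedEmbedding hiso.isClosedEmbedding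
  have h3 := h2.enorm_le_lintegral_Ici_deriv h1 0
  simp only [zero_smul, add_zero] at h3
  refine h3.trans ?_
  have h4 : ∀ t : ℝ, ‖deriv (fun t : ℝ => w (x + t • (θ : E))) t‖ₑ ≤
      ‖fderiv ℝ w (x + t • (θ : E))‖ₑ := by
    intro t
    have hd : HasDerivAt (fun t : ℝ => x + t • (θ : E)) (θ : E) t := by
      simpa using ((hasDerivAt_id t).smul_const (θ : E)).const_add x
    have := ((hw.differentiable one_ne_zero).differentiableAt
      (x := x + t • (θ : E))).hasFDerivAt.comp_hasDerivAt t hd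
    have he : deriv (fun t : ℝ => w (x + t • (θ : E))) t = fderiv ℝ w (x + t • (θ : E)) θ :=
      this.deriv
    rw [he]
    refine enorm_le_iff_norm_le.2 ?_
    simpa [hθ] using (fderiv ℝ w (x + t • (θ : E))).le_opNorm (θ : E)
  refine (lintegral_mono h4).trans_eq ?_
  have := (Measure.measurePreserving_neg (volume : Measure ℝ)).setLIntegral_comp_preimage_emb
    (MeasurableEquiv.neg ℝ).measurableEmbedding
    (fun t : ℝ => ‖fderiv ℝ w (x + t • (θ : E))‖ₑ) (Iic 0)
  rw [← this]
  simp only [neg_preimage, neg_Iic, neg_zero, neg_smul, ← sub_eq_add_neg]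
  exact setLIntegral_congr Ioi_ae_eq_Ici.symm

/-- The pointwise estimate of a compactly supported function by the Riesz potential of its
gradient, obtained by averaging the bound along rays over the sphere of directions. -/
lemma enorm_le_rieszPotential {w : E → ℝ} (hw : ContDiff ℝ 1 w) (hc : HasCompactSupport w)
    (x : E) :
    μ.toSphere univ * ‖w x‖ₑ ≤ ∫⁻ y, ‖fderiv ℝ w y‖ₑ * rieszKernel (x - y) ∂μ := by
  have hcont : Continuous (fderiv ℝ w) := hw.continuous_fderiv one_ne_zero
  calc μ.toSphere univ * ‖w x‖ₑ = ∫⁻ _θ : sphere (0 : E) 1, ‖w x‖ₑ ∂μ.toSphere := by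
        rw [lintegral_const, mul_comm]
    _ ≤ ∫⁻ θ : sphere (0 : E) 1, (∫⁻ r in Ioi (0 : ℝ), ‖fderiv ℝ w (x - r • (θ : E))‖ₑ)
          ∂μ.toSphere := lintegral_mono fun θ => enorm_le_lintegral_ray hw hc x θ
    _ = ∫⁻ z, ‖fderiv ℝ w (x - z)‖ₑ * rieszKernel z ∂μ :=
        (lintegral_mul_rieszKernel μ (f := fun z => ‖fderiv ℝ w (x - z)‖ₑ)
          (by apply Continuous.measurable; fun_prop)).symm
    _ = _ := by
        rw [← lintegral_sub_left_eq_self _ x]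
        simp

/-- The Riesz kernel has integral at most `(σ + 1) R` over any set of measure `R ^ n`, where `σ` is
the area of the unit sphere. The kernel is split at distance `R`. -/
lemma setLIntegral_rieszKernel_le {R : ℝ} (hR : 0 < R) {s : Set E}
    (hs : μ s = ENNReal.ofReal (R ^ finrank ℝ E)) (x : E) :
    ∫⁻ y in s, rieszKernel (x - y) ∂μ ≤ (μ.toSphere univ + 1) * ENNReal.ofReal R := by
  set n := finrank ℝ E with hn
  have hn1 : n - 1 + 1 = n := Nat.sub_add_cancel finrank_pos
  have hpt : ∀ z : E, rieszKernel z ≤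
      (ball (0 : E) R).indicator 1 z * rieszKernel z + (ENNReal.ofReal (R ^ (n - 1)))⁻¹ := by
    intro z
    by_cases hz : z ∈ ball (0 : E) R
    · simp [hz]
    · have : R ≤ ‖z‖ := by simpa using hz
      refine le_add_left ?_
      unfold rieszKernel
      gcongr
  have hind : Measurable ((ball (0 : E) R).indicator (1 : E → ℝ≥0∞)) :=
    measurable_one.indicator measurableSet_ball
  have h1 : ∫⁻ y in s, (ball (0 : E) R).indicator 1 (x - y) * rieszKernel (x - y) ∂μ ≤
      μ.toSphere univ * ENNReal.ofReal R := by
    calc _ ≤ ∫⁻ y, (ball (0 : E) R).indicator 1 (x - y) * rieszKernel (x - y) ∂μ :=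
          setLIntegral_le_lintegral _ _
      _ = ∫⁻ z, (ball (0 : E) R).indicator 1 z * rieszKernel z ∂μ :=
          lintegral_sub_left_eq_self
            (fun z => (ball (0 : E) R).indicator 1 z * rieszKernel z) x
      _ = ∫⁻ θ : sphere (0 : E) 1, (∫⁻ r in Ioi (0 : ℝ),
            (ball (0 : E) R).indicator 1 (r • (θ : E))) ∂μ.toSphere :=
          lintegral_mul_rieszKernel μ hind
      _ = ∫⁻ _θ : sphere (0 : E) 1, ENNReal.ofReal R ∂μ.toSphere := by
          refine lintegral_congr fun θ => ?_
          calc _ = ∫⁻ r in Ioi (0 : ℝ), (Iio R).indicator 1 r := by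
                refine setLIntegral_congr_fun measurableSet_Ioi fun r hr => ?_
                have hr : 0 < r := hr
                simp [indicator, norm_smul, abs_of_pos hr]
            _ = ENNReal.ofReal R := by
                rw [lintegral_indicator_one measurableSet_Iio,
                  Measure.restrict_apply measurableSet_Iio, inter_comm, Ioi_inter_Iio]
                simp
      _ = _ := by rw [lintegral_const, mul_comm]
  have h2 : (ENNReal.ofReal (R ^ (n - 1)))⁻¹ * μ s = ENNReal.ofReal R := by
    have hp : 0 < R ^ (n - 1) := pow_pos hR _
    rw [hs, ← hn1, pow_succ, Nat.add_sub_cancel, ENNReal.ofReal_mul hp.le, ← mul_assoc,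
      ENNReal.inv_mul_cancel (by simpa using hp) ENNReal.ofReal_ne_top, one_mul]
  calc _ ≤ ∫⁻ y in s, ((ball (0 : E) R).indicator 1 (x - y) * rieszKernel (x - y) +
        (ENNReal.ofReal (R ^ (n - 1)))⁻¹) ∂μ := lintegral_mono fun y => hpt (x - y)
    _ = ∫⁻ y in s, (ball (0 : E) R).indicator 1 (x - y) * rieszKernel (x - y) ∂μ +
        (ENNReal.ofReal (R ^ (n - 1)))⁻¹ * μ s := by
        rw [lintegral_add_right _ measurable_const, setLIntegral_const]
    _ ≤ _ := by rw [h2, add_mul, one_mul]; gcongr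

end Polar

/-- Talenti's Orlicz–Poincaré inequality for compactly supported C¹ functions. -/
theorem stmt_15 :
    ∀ d : ℕ, 1 ≤ d → ∃ χ > (0:ℝ),
      ∀ Ω : Set (EuclideanSpace ℝ (Fin d)), IsOpen Ω → Bornology.IsBounded Ω →
        0 < volume Ω →
      ∀ A : ℝ → ℝ, ConvexOn ℝ (Set.Ici 0) A → MonotoneOn A (Set.Ici 0) → A 0 = 0 →
        (∀ z ≥ (0:ℝ), 0 ≤ A z) →
      ∀ w : EuclideanSpace ℝ (Fin d) → ℝ, ContDiff ℝ 1 w → HasCompactSupport w →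
        tsupport w ⊆ Ω →
      ∫ x in Ω, A (χ / (d * (volume Ω).toReal ^ (1 / (d:ℝ))) * |w x|) ≤
        (1 / d) * ∫ x in Ω, A ‖fderiv ℝ w x‖ := by
  intro d hd
  have hd0 : (0 : ℝ) < d := by exact_mod_cast hd
  have : Nonempty (Fin d) := ⟨⟨0, hd⟩⟩
  have hfin : finrank ℝ (EuclideanSpace ℝ (Fin d)) = d := by simp
  set σ : Measure (sphere (0 : EuclideanSpace ℝ (Fin d)) 1) := Measure.toSphere volume with hσ
  set S : ℝ := σ.real univ with hS
  have hS0 : 0 < S := by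
    rw [hS, measureReal_def]
    exact ENNReal.toReal_pos (Measure.measure_univ_ne_zero.2 (Measure.toSphere_ne_zero _))
      (by finiteness)
  have hSe : σ univ = ENNReal.ofReal S := by simp [hS]
  refine ⟨S / (S + 1), by positivity, ?_⟩
  intro Ω hΩ hΩb hΩ0 A₀ hA₀ hmono₀ hA₀0 hAnn w hw hc hsupp
  have hΩfin : volume Ω ≠ ∞ := hΩb.measure_lt_top.ne
  have hV : 0 < (volume Ω).toReal := ENNReal.toReal_pos hΩ0.ne' hΩfin
  set R : ℝ := (volume Ω).toReal ^ (1 / (d : ℝ)) with hR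
  have hR0 : 0 < R := Real.rpow_pos_of_pos hV _
  have hRd : volume Ω = ENNReal.ofReal (R ^ finrank ℝ (EuclideanSpace ℝ (Fin d))) := by
    rw [hfin, hR, ← Real.rpow_natCast, ← Real.rpow_mul hV.le, one_div_mul_cancel hd0.ne',
      Real.rpow_one, ENNReal.ofReal_toReal hΩfin]
  set c : ℝ := S / (S + 1) / (d * R) with hcdef
  have hc0 : 0 < c := by positivity
  -- A monotone, hence Borel measurable, function on the whole line, equal to `A₀` on `[0, ∞)`.
  set A : ℝ → ℝ := fun t => A₀ (max t 0) with hAdef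
  have hAeq : ∀ t, 0 ≤ t → A t = A₀ t := fun t ht => by simp [hAdef, ht]
  have hmono : Monotone A := fun s t hst =>
    hmono₀ (mem_Ici.2 (le_max_right _ _)) (mem_Ici.2 (le_max_right _ _))
      (max_le_max_right 0 hst)
  have hA : ConvexOn ℝ (Ici 0) A := hA₀.congr fun t ht => (hAeq t ht).symm
  have hA0 : A 0 = 0 := by rw [hAeq 0 le_rfl, hA₀0]
  have hApos : ∀ t, 0 ≤ A t := fun t => hAnn _ (le_max_right _ _)
  have hAm : Measurable A := hmono.measurable
  have hcont : Continuous (fderiv ℝ w) := hw.continuous_fderiv one_ne_zero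
  have hg : Measurable fun y => ‖fderiv ℝ w y‖ := hcont.norm.measurable
  have hAg : Measurable fun y => ENNReal.ofReal (A ‖fderiv ℝ w y‖) := (hAm.comp hg).ennreal_ofReal
  set k : EuclideanSpace ℝ (Fin d) → ℝ≥0∞ := fun z => ENNReal.ofReal (c / S) * rieszKernel z
    with hk
  have hkm : Measurable k := measurable_rieszKernel.const_mul _
  have hkeven : ∀ z, k (-z) = k z := fun z => by simp [hk, rieszKernel]
  have hkint : ∀ x, ∫⁻ y in Ω, k (x - y) ≤ ENNReal.ofReal (1 / d) := by
    intro x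
    have h1 := setLIntegral_rieszKernel_le volume hR0 hRd x
    rw [← hσ, hSe, ← ENNReal.ofReal_one, ← ENNReal.ofReal_add hS0.le zero_le_one,
      ← ENNReal.ofReal_mul (by positivity)] at h1
    calc ∫⁻ y in Ω, k (x - y)
        = ENNReal.ofReal (c / S) * ∫⁻ y in Ω, rieszKernel (x - y) :=
          lintegral_const_mul _ (measurable_rieszKernel.comp (by fun_prop))
      _ ≤ ENNReal.ofReal (c / S) * ENNReal.ofReal ((S + 1) * R) := by gcongr
      _ = ENNReal.ofReal (1 / d) := by
          rw [← ENNReal.ofReal_mul (by positivity), hcdef]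
          congr 1
          field_simp
  have hone : ENNReal.ofReal (1 / d) ≤ 1 := by
    rw [ENNReal.ofReal_le_one, div_le_one hd0]
    exact_mod_cast hd
  have hpt : ∀ x, ENNReal.ofReal (A (c * |w x|)) ≤
      ∫⁻ y in Ω, ENNReal.ofReal (A ‖fderiv ℝ w y‖) * k (x - y) := by
    intro x
    have hkx : Measurable fun y => k (x - y) := hkm.comp (by fun_prop)
    have hwd : ∀ f : EuclideanSpace ℝ (Fin d) → ℝ≥0∞, Measurable f →
        ∫⁻ y, f y ∂((volume.restrict Ω).withDensity fun y => k (x - y)) =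
          ∫⁻ y in Ω, f y * k (x - y) := fun f hf => by
      rw [lintegral_withDensity_eq_lintegral_mul _ hkx hf]
      simp only [Pi.mul_apply, mul_comm]
    rw [← hwd _ hAg]
    refine young_jensen ?_ hA hmono hA0 hg (fun y => norm_nonneg _) (by positivity) ?_
    · rw [withDensity_apply _ MeasurableSet.univ, Measure.restrict_univ]
      exact (hkint x).trans hone
    rw [hwd _ hg.ennreal_ofReal]
    have h1 := enorm_le_rieszPotential volume hw hc x
    rw [← hσ, hSe] at h1
    have hΩint : ∫⁻ y in Ω, ‖fderiv ℝ w y‖ₑ * rieszKernel (x - y) =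
        ∫⁻ y, ‖fderiv ℝ w y‖ₑ * rieszKernel (x - y) := by
      refine setLIntegral_eq_of_support_subset ?_
      intro y hy
      by_contra hyΩ
      refine hy ?_
      have : fderiv ℝ w y = 0 := by
        by_contra hne
        exact hyΩ (hsupp (support_fderiv_subset ℝ hne))
      have h0 : ‖fderiv ℝ w y‖ₑ = 0 := by
        rw [← ofReal_norm, this, norm_zero, ENNReal.ofReal_zero]
      simp only [h0, zero_mul]
    calc ENNReal.ofReal (c * |w x|)
        = ENNReal.ofReal (c / S) * (ENNReal.ofReal S * ‖w x‖ₑ) := by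
          rw [← ofReal_norm, Real.norm_eq_abs, ← ENNReal.ofReal_mul hS0.le,
            ← ENNReal.ofReal_mul (by positivity)]
          congr 1
          field_simp
      _ ≤ ENNReal.ofReal (c / S) * ∫⁻ y in Ω, ‖fderiv ℝ w y‖ₑ * rieszKernel (x - y) := by
          rw [hΩint]; gcongr
      _ = _ := by
          have hgK : Measurable fun y => ‖fderiv ℝ w y‖ₑ * rieszKernel (x - y) :=
            hcont.enorm.measurable.mul (measurable_rieszKernel.comp (by fun_prop))
          rw [← lintegral_const_mul _ hgK]
          refine lintegral_congr fun y => ?_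
          rw [ofReal_norm, hk]
          ring
  have hmain : ∫⁻ x in Ω, ENNReal.ofReal (A (c * |w x|)) ≤
      ENNReal.ofReal (1 / d) * ∫⁻ y in Ω, ENNReal.ofReal (A ‖fderiv ℝ w y‖) := by
    calc _ ≤ ∫⁻ x in Ω, ∫⁻ y in Ω, ENNReal.ofReal (A ‖fderiv ℝ w y‖) * k (x - y) :=
          lintegral_mono hpt
      _ = ∫⁻ y in Ω, ∫⁻ x in Ω, ENNReal.ofReal (A ‖fderiv ℝ w y‖) * k (x - y) := by
          refine lintegral_lintegral_swap (Measurable.aemeasurable ?_)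
          exact (hAg.comp measurable_snd).mul (hkm.comp (by fun_prop))
      _ = ∫⁻ y in Ω, ENNReal.ofReal (A ‖fderiv ℝ w y‖) * ∫⁻ x in Ω, k (y - x) := by
          refine lintegral_congr fun y => ?_
          have hky : Measurable fun x => k (x - y) := hkm.comp (by fun_prop)
          rw [lintegral_const_mul _ hky]
          congr 1
          refine lintegral_congr fun x => ?_
          rw [← hkeven, neg_sub]
      _ ≤ ∫⁻ y in Ω, ENNReal.ofReal (A ‖fderiv ℝ w y‖) * ENNReal.ofReal (1 / d) := by
          gcongr with y
          exact hkint y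
      _ = _ := by rw [lintegral_mul_const _ hAg, mul_comm]
  -- The right-hand side is finite, so the inequality descends to Bochner integrals.
  have hRfin : ∫⁻ y in Ω, ENNReal.ofReal (A ‖fderiv ℝ w y‖) ≠ ∞ := by
    obtain ⟨M, hM⟩ := (hc.fderiv ℝ).exists_bound_of_continuous hcont
    refine ((lintegral_mono (g := fun _ => ENNReal.ofReal (A M)) fun y =>
      ENNReal.ofReal_le_ofReal (hmono (hM y))).trans_lt ?_).ne
    rw [setLIntegral_const]
    exact ENNReal.mul_lt_top ENNReal.ofReal_lt_top hΩfin.lt_top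
  have e1 : ∫ x in Ω, A₀ (c * |w x|) = (∫⁻ x in Ω, ENNReal.ofReal (A (c * |w x|))).toReal := by
    rw [← integral_eq_lintegral_of_nonneg_ae (.of_forall fun x => hApos _)
      (hAm.comp ((hw.continuous.abs.const_mul c).measurable)).aestronglyMeasurable]
    exact integral_congr_ae (.of_forall fun x => (hAeq _ (by positivity)).symm)
  have e2 : ∫ x in Ω, A₀ ‖fderiv ℝ w x‖ =
      (∫⁻ x in Ω, ENNReal.ofReal (A ‖fderiv ℝ w x‖)).toReal := by
    rw [← integral_eq_lintegral_of_nonneg_ae (.of_forall fun x => hApos _)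
      (hAm.comp hg).aestronglyMeasurable]
    exact integral_congr_ae (.of_forall fun x => (hAeq _ (norm_nonneg _)).symm)
  rw [e1, e2]
  refine (ENNReal.toReal_mono (ENNReal.mul_ne_top ENNReal.ofReal_ne_top hRfin) hmain).trans_eq ?_
  rw [ENNReal.toReal_mul, ENNReal.toReal_ofReal (by positivity)]
end

section
/- Let d ≥ 2 and let Ω ⊂ ℝ^d be a bounded open set. Let A be a Young function satisfying the Δ²₂-condition: there exist constants a₁ > 2 and a₂ < ∞ with a₁·A(z) ≤ A(2z) ≤ a₂·A(z) for all z ≥ 0. Then there exists a constant c > 0 such that for every continuously differentiable map w : ℝ^d → ℝ^d with compact support contained in Ω, ∫_Ω A( ‖∇w(x)‖_F ) dx ≤ ∫_Ω A( c·‖ (∇w(x) + ∇w(x)ᵀ)/2 − (div w(x)/d)·I ‖_F ) dx, where ‖·‖_F is the Frobenius norm and I the d×d identity matrix. -/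
/-!
The gradient of a compactly supported field is a singular integral of the traceless part `E` of its
symmetric gradient. Taking Fourier transforms, with `m_{ij} = ξ_i ξ_j / |ξ|²`, one has
`div w = d / (d - 1) ∑_{ij} m_{ij} E_{ij}` and
`∂_k w_i = 2 ∑_j m_{kj} E_{ij} + (2 / d - 1) m_{ki} div w` (`FT_trace_eq`, `FT_gradMat_eq`). So it
suffices to prove modular estimates `∫ A |u| ≤ ∑ ∫ A |K F_a|` for linear combinations `u` of
second-order Riesz transforms of functions `F_a` (`IsYoung.exists_modular`).

These follow from a Bellman function. If `Q(x, y) ≥ 0` is midpoint convex with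
`Q(x + a, y + b) + Q(x - a, y - b) - 2 Q(x, y) ≥ 2 |a b|` (`Gain`), then `∫ Q(f, g)` decreases when
`f` and `g` are averaged by a step `± v` of a random walk, and the loss is at least the `L¹` norm of
the product of the martingale differences of `f` and `g` (`lintegral_avg`). Summing over a walk
which runs periodically through a list of steps `v, v₁, …, v_r`, and evaluating by Plancherel the
contributions of the steps `± v`, one gets
`|∫ m f^ conj(g^)| ≤ ∫ Q(f, g)` for the multiplier `m = sin² (2π ⟨v, ξ⟩) / (1 - ∏ cos²)`; scaling the
steps to zero gives `m = ⟨v, ξ⟩² / (⟨v, ξ⟩² + ∑ ⟨v_i, ξ⟩²)` (`enorm_integral_mul_le`). With the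
steps `e_i ± e_j`, differences of such multipliers are the Riesz symbols (`enorm_riesz_le`).

A suitable `Q` with `Q(x, y) ≲ A |x| + A* |y|` is the sum over the dyadic scales `2ʲ` of copies,
rescaled to `x ~ 2ʲ`, `y ~ A(2ʲ) / 2ʲ`, of a convex function of linear growth that vanishes near the
origin and is strictly convex on the unit scale (`bell`, `bell_gain`, `bell_le`). The lower bound
`a₁ > 2` makes the scales `A(2ʲ) / 2ʲ` grow geometrically, and both bounds are used in summing the
series. Applied to `f = K F` and `g = A |u| / u`, so that `∫ u g = ∫ A |u|` and `A* |g| ≲ A |u|`, this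
bounds `∫ A |u|` by `(C / K) (∑ ∫ A |K F_a| + ∫ A |u|)`, and for large `K` the last term is absorbed.
-/

open Matrix

open MeasureTheory

/-- Frobenius norm of a real square matrix. -/
noncomputable def frobNorm {d : ℕ} (M : Matrix (Fin d) (Fin d) ℝ) : ℝ :=
  Real.sqrt (Matrix.trace (Mᵀ * M))

/-- The gradient matrix `(∇w)_{ij} = ∂_j w_i` of a vector field `w : ℝᵈ → ℝᵈ`. -/
noncomputable def gradMat {d : ℕ} (w : EuclideanSpace ℝ (Fin d) → EuclideanSpace ℝ (Fin d))
    (x : EuclideanSpace ℝ (Fin d)) : Matrix (Fin d) (Fin d) ℝ :=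
  fun i j => fderiv ℝ w x (EuclideanSpace.single j 1) i

open Set Filter Topology

namespace OrliczKorn

/-! ### A Bellman function for the pair `(A, A*)` -/

/-- A Young function, positive away from the origin, satisfying the `Δ²₂`-condition. -/
structure IsYoung (A : ℝ → ℝ) (a₁ a₂ : ℝ) : Prop where
  conv : ConvexOn ℝ (Ici 0) A
  mono : MonotoneOn A (Ici 0)
  zero : A 0 = 0
  pos : ∀ z > 0, 0 < A z
  two_lt : 2 < a₁
  doubling : ∀ z ≥ (0:ℝ), a₁ * A z ≤ A (2 * z) ∧ A (2 * z) ≤ a₂ * A z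

/-- The Huber function: quadratic on `[-2, 2]`, continued `C¹` by affine functions. -/
noncomputable def hub (t : ℝ) : ℝ := if |t| ≤ 2 then t ^ 2 else 4 * |t| - 4

lemma hub_of_le {t : ℝ} (h : |t| ≤ 2) : hub t = t ^ 2 := if_pos h

lemma hub_neg (t : ℝ) : hub (-t) = hub t := by simp [hub]

lemma hub_nonneg (t : ℝ) : 0 ≤ hub t := by
  unfold hub
  split_ifs with h
  · positivity
  · push Not at h; linarith

lemma hub_le (t : ℝ) : hub t ≤ 4 * |t| := by
  unfold hub
  split_ifs with h
  · rw [← sq_abs]; nlinarith [abs_nonneg t]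
  · linarith

/-- `hub` lies above its tangents: they are `t ↦ p t - p² / 4` with `|p| ≤ 4`. -/
lemma tangent_le_hub {p : ℝ} (hp : |p| ≤ 4) (t : ℝ) : p * t - p ^ 2 / 4 ≤ hub t := by
  unfold hub
  split_ifs with h
  · nlinarith [sq_nonneg (2 * t - p)]
  · push Not at h
    have h1 : p * t ≤ |p| * |t| := by rw [← abs_mul]; exact le_abs_self _
    rw [← sq_abs p]
    nlinarith [mul_nonneg (sub_nonneg.2 hp) (sub_nonneg.2 h.le), abs_nonneg p]

lemma exists_tangent (m : ℝ) : ∃ p : ℝ, |p| ≤ 4 ∧ hub m = p * m - p ^ 2 / 4 := by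
  by_cases h : |m| ≤ 2
  · refine ⟨2 * m, ?_, ?_⟩
    · rw [abs_mul, abs_two]; linarith
    · rw [hub_of_le h]; ring
  · rcases le_total 0 m with h0 | h0
    · refine ⟨4, by norm_num, ?_⟩
      rw [hub, if_neg h, abs_of_nonneg h0]; ring
    · refine ⟨-4, by norm_num, ?_⟩
      rw [hub, if_neg h, abs_of_nonpos h0]; ring

lemma hub_midpoint (x a : ℝ) : 2 * hub x ≤ hub (x + a) + hub (x - a) := by
  obtain ⟨p, hp, h⟩ := exists_tangent x
  have h1 := tangent_le_hub hp (x + a)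
  have h2 := tangent_le_hub hp (x - a)
  rw [h]; linarith

lemma continuous_hub : Continuous hub := by
  unfold hub
  refine Continuous.if_le (by fun_prop) (by fun_prop) (by fun_prop) (by fun_prop) ?_
  intro t ht
  rw [← sq_abs, ht]; norm_num

/-- The building block of the Bellman function: a convex function of linear growth which
vanishes near the origin and is uniformly convex at unit distance from it. -/
noncomputable def blk (e x y : ℝ) : ℝ := max 0 (hub x + hub y - e)

lemma blk_nonneg (e x y : ℝ) : 0 ≤ blk e x y := le_max_left _ _

lemma blk_midpoint (e x y a b : ℝ) :
    2 * blk e x y ≤ blk e (x + a) (y + b) + blk e (x - a) (y - b) := by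
  have h1 := hub_midpoint x a
  have h2 := hub_midpoint y b
  have h3 := le_max_right 0 (hub (x + a) + hub (y + b) - e)
  have h4 := le_max_right 0 (hub (x - a) + hub (y - b) - e)
  have h5 := blk_nonneg e (x + a) (y + b)
  have h6 := blk_nonneg e (x - a) (y - b)
  have : blk e x y ≤ (blk e (x + a) (y + b) + blk e (x - a) (y - b)) / 2 := by
    refine max_le (by linarith) ?_
    unfold blk
    linarith
  linarith

/-- Strict convexity of a block at unit scale. -/
lemma blk_gain {e x y a b : ℝ} (hx : |x| ≤ 1) (hy : |y| ≤ 1) (ha : |a| ≤ 1) (hb : |b| ≤ 1)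
    (h : 2 * e ≤ x ^ 2 ∨ 2 * e ≤ y ^ 2 ∨ 2 * e ≤ a ^ 2 ∨ 2 * e ≤ b ^ 2) (he : 0 ≤ e) :
    2 * blk e x y + 2 * |a * b| ≤ blk e (x + a) (y + b) + blk e (x - a) (y - b) := by
  have e1 : hub (x + a) = (x + a) ^ 2 := hub_of_le ((abs_add_le _ _).trans (by linarith))
  have e2 : hub (y + b) = (y + b) ^ 2 := hub_of_le ((abs_add_le _ _).trans (by linarith))
  have e3 : hub (x - a) = (x - a) ^ 2 := hub_of_le ((abs_sub _ _).trans (by linarith))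
  have e4 : hub (y - b) = (y - b) ^ 2 := hub_of_le ((abs_sub _ _).trans (by linarith))
  have e5 : hub x = x ^ 2 := hub_of_le (by linarith)
  have e6 : hub y = y ^ 2 := hub_of_le (by linarith)
  have h3 := le_max_right 0 (hub (x + a) + hub (y + b) - e)
  have h4 := le_max_right 0 (hub (x - a) + hub (y - b) - e)
  have hab : 2 * |a * b| ≤ a ^ 2 + b ^ 2 := by
    rw [abs_mul, ← sq_abs a, ← sq_abs b]
    nlinarith [sq_nonneg (|a| - |b|)]
  change blk e (x + a) (y + b) ≥ _ at h3
  change blk e (x - a) (y - b) ≥ _ at h4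
  rw [e1, e2] at h3
  rw [e3, e4] at h4
  unfold blk at h3 h4 ⊢
  rw [e5, e6]
  rcases le_total 0 (x ^ 2 + y ^ 2 - e) with h0 | h0
  · rw [max_eq_right h0]
    linarith [sq_nonneg a, sq_nonneg b]
  · rw [max_eq_left h0]
    have : 2 * e ≤ a ^ 2 + b ^ 2 ∨ e = 0 ∧ x ^ 2 + y ^ 2 = 0 := by
      rcases h with h | h | h | h
      · right; constructor <;> nlinarith [sq_nonneg x, sq_nonneg y]
      · right; constructor <;> nlinarith [sq_nonneg x, sq_nonneg y]
      · left; nlinarith [sq_nonneg b]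
      · left; nlinarith [sq_nonneg a]
    rcases this with h' | ⟨h', h''⟩
    · nlinarith [sq_nonneg x, sq_nonneg y]
    · nlinarith [sq_nonneg x, sq_nonneg y, sq_nonneg a, sq_nonneg b]

lemma blk_le (e x y : ℝ) (he : 0 ≤ e) : blk e x y ≤ 4 * (|x| + |y|) := by
  refine max_le (by positivity) ?_
  linarith [hub_le x, hub_le y]

lemma blk_eq_zero {e r x y : ℝ} (hr : r ≤ 1) (hre : 2 * r ^ 2 ≤ e) (hx : |x| ≤ r)
    (hy : |y| ≤ r) : blk e x y = 0 := by
  refine max_eq_left ?_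
  rw [hub_of_le (by linarith), hub_of_le (by linarith), ← sq_abs x, ← sq_abs y]
  nlinarith [abs_nonneg x, abs_nonneg y]

namespace IsYoung

variable {A : ℝ → ℝ} {a₁ a₂ : ℝ}

lemma nonneg (hA : IsYoung A a₁ a₂) {z : ℝ} (hz : 0 ≤ z) : 0 ≤ A z := by
  rw [← hA.zero]; exact hA.mono (mem_Ici.2 le_rfl) hz hz

lemma a₁_le_a₂ (hA : IsYoung A a₁ a₂) : a₁ ≤ a₂ := by
  have h := hA.doubling 1 zero_le_one
  exact le_of_mul_le_mul_right (h.1.trans h.2) (hA.pos 1 one_pos)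

lemma div_mono (hA : IsYoung A a₁ a₂) {s t : ℝ} (hs : 0 < s) (hst : s ≤ t) :
    A s / s ≤ A t / t := by
  have ht : 0 < t := hs.trans_le hst
  have h := hA.conv.2 (mem_Ici.2 le_rfl) (mem_Ici.2 ht.le)
    (show 0 ≤ 1 - s / t by rw [sub_nonneg, div_le_one ht]; exact hst)
    (show 0 ≤ s / t by positivity) (by ring)
  simp only [smul_eq_mul, mul_zero, zero_add, hA.zero] at h
  rw [div_mul_cancel₀ _ ht.ne'] at h
  rw [div_le_iff₀ hs]
  calc A s ≤ _ := h
    _ = _ := by ring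

lemma mul_le (hA : IsYoung A a₁ a₂) {M z : ℝ} (hM : 1 ≤ M) (hz : 0 ≤ z) :
    M * A z ≤ A (M * z) := by
  rcases hz.eq_or_lt with rfl | hz
  · simp [hA.zero]
  · have h := hA.div_mono hz (le_mul_of_one_le_left hz.le hM)
    rw [div_le_div_iff₀ hz (by positivity)] at h
    nlinarith

lemma continuous_abs (hA : IsYoung A a₁ a₂) : Continuous fun t : ℝ => A |t| := by
  have : ConvexOn ℝ univ fun t : ℝ => A |t| := by
    refine ⟨convex_univ, fun x _ y _ a b ha hb hab => ?_⟩
    refine le_trans (hA.mono (mem_Ici.2 (abs_nonneg _)) ?_ ?_)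
      (hA.conv.2 (abs_nonneg x) (abs_nonneg y) ha hb hab)
    · simp only [smul_eq_mul, mem_Ici]; positivity
    · simp only [smul_eq_mul]
      refine (abs_add_le _ _).trans ?_
      rw [abs_mul, abs_mul, abs_of_nonneg ha, abs_of_nonneg hb]
  exact continuousOn_univ.1 (this.continuousOn isOpen_univ)

lemma pow_mul_le (hA : IsYoung A a₁ a₂) (k : ℕ) {z : ℝ} (hz : 0 ≤ z) :
    a₁ ^ k * A z ≤ A (2 ^ k * z) := by
  induction k with
  | zero => simp
  | succ k ih =>
    have := (hA.doubling (2 ^ k * z) (by positivity)).1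
    have h2 := hA.two_lt
    calc a₁ ^ (k + 1) * A z = a₁ * (a₁ ^ k * A z) := by ring
      _ ≤ a₁ * A (2 ^ k * z) := by gcongr
      _ ≤ A (2 * (2 ^ k * z)) := this
      _ = _ := by ring_nf

lemma le_pow_mul (hA : IsYoung A a₁ a₂) (k : ℕ) {z : ℝ} (hz : 0 ≤ z) :
    A (2 ^ k * z) ≤ a₂ ^ k * A z := by
  induction k with
  | zero => simp
  | succ k ih =>
    have := (hA.doubling (2 ^ k * z) (by positivity)).2
    have h2 := hA.two_lt.trans_le hA.a₁_le_a₂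
    calc A (2 ^ (k + 1) * z) = A (2 * (2 ^ k * z)) := by ring_nf
      _ ≤ a₂ * A (2 ^ k * z) := this
      _ ≤ a₂ * (a₂ ^ k * A z) := by gcongr
      _ = _ := by ring

/-- The function `A |u| / u`, which pairs with `u` to `A |u|`, is continuous also at the zeros of `u`,
where the quotient takes the junk value `0`: `A s / s` tends to `0` because `2 < a₁`. -/
lemma continuous_dual (hA : IsYoung A a₁ a₂) : Continuous fun t : ℝ => A |t| / t := by
  rw [continuous_iff_continuousAt]
  intro t
  by_cases ht : t = 0
  · subst ht
    have h0 : Tendsto (fun t : ℝ => A |t| / |t|) (𝓝 0) (𝓝 0) := by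
      rw [Metric.tendsto_nhds]
      intro ε hε
      -- `A s / s` is at most `(2 / a₁) ^ k * A 1` for `s ≤ 2⁻ᵏ`
      have hr : Tendsto (fun k : ℕ => (2 / a₁) ^ k * A 1) atTop (𝓝 (0 * A 1)) :=
        (tendsto_pow_atTop_nhds_zero_of_lt_one (by have := hA.two_lt; positivity)
          (by rw [div_lt_one (by linarith [hA.two_lt])]; exact hA.two_lt)).mul_const _
      rw [zero_mul] at hr
      obtain ⟨k, hk⟩ := (hr.eventually (gt_mem_nhds hε)).exists
      have : ∀ᶠ s : ℝ in 𝓝 0, |s| < (2 ^ k)⁻¹ := by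
        have := (_root_.continuous_abs (G := ℝ)).tendsto 0
        rw [abs_zero] at this
        exact this.eventually (gt_mem_nhds (by positivity))
      filter_upwards [this] with s hs
      have hnn : 0 ≤ A |s| / |s| := div_nonneg (hA.nonneg (abs_nonneg s)) (abs_nonneg s)
      rw [Real.dist_eq, sub_zero, abs_of_nonneg hnn]
      rcases (abs_nonneg s).eq_or_lt with h | h
      · rw [← h]; simpa using hε
      · refine lt_of_le_of_lt ((hA.div_mono h hs.le).trans ?_) hk
        have := hA.pow_mul_le k (z := (2 ^ k)⁻¹) (by positivity)
        rw [mul_inv_cancel₀ (by positivity)] at this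
        have h2 : (0:ℝ) < a₁ ^ k := by have := hA.two_lt; positivity
        rw [div_inv_eq_mul, div_pow]
        rw [mul_comm (_ / _), ← mul_div_assoc, le_div_iff₀ h2]
        nlinarith [pow_pos (two_pos (α := ℝ)) k]
    have : Tendsto (fun t : ℝ => A |t| / t) (𝓝 0) (𝓝 0) := by
      rw [tendsto_zero_iff_abs_tendsto_zero]
      refine h0.congr fun t => ?_
      simp only [Function.comp, abs_div]
      rw [abs_of_nonneg (hA.nonneg (abs_nonneg t))]
    simpa [ContinuousAt, hA.zero] using this
  · exact hA.continuous_abs.continuousAt.div continuousAt_id ht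

end IsYoung

open scoped ENNReal

/-- The Bellman function: the blocks are rescaled to the scales `x ~ 2ʲ`, `y ~ A (2ʲ) / 2ʲ` and
summed. The value lies in `ℝ≥0∞`, so that no summability is needed to manipulate it. -/
noncomputable def bell (A : ℝ → ℝ) (e x y : ℝ) : ℝ≥0∞ :=
  ∑' j : ℤ, ENNReal.ofReal (A (2 ^ j) * blk e (x / 2 ^ j) (y * 2 ^ j / A (2 ^ j)))

lemma measurable_bell (A : ℝ → ℝ) (e : ℝ) : Measurable fun p : ℝ × ℝ => bell A e p.1 p.2 := by
  unfold bell blk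
  refine Measurable.tsum fun j => ?_
  have := continuous_hub
  exact ENNReal.measurable_ofReal.comp (by fun_prop : Continuous fun p : ℝ × ℝ =>
    A (2 ^ j) * max 0 (hub (p.1 / 2 ^ j) + hub (p.2 * 2 ^ j / A (2 ^ j)) - e)).measurable

namespace IsYoung

variable {A : ℝ → ℝ} {a₁ a₂ : ℝ}

/-- The scale `2ʲ` at which the point `(x, y)` and the increment `(a, b)` are bounded after rescaling
(with `M = max |x| |a|`, `L = max |y| |b|`), while at least one of the four numbers stays bounded
away from zero. -/
lemma exists_scale (hA : IsYoung A a₁ a₂) {M L : ℝ} (hM : 0 < M) :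
    ∃ j : ℤ, M ≤ 2 ^ j ∧ L ≤ A (2 ^ j) / 2 ^ j ∧
      (2 ^ j ≤ 2 * M ∨ A (2 ^ j) / 2 ^ j ≤ a₂ * L) := by
  have h2 := hA.two_lt
  obtain ⟨j, ⟨hj1, hj2⟩, hmin⟩ := Int.exists_least_of_bdd
    (P := fun j : ℤ => M ≤ 2 ^ j ∧ L ≤ A (2 ^ j) / 2 ^ j) (by
      obtain ⟨b, hb, -⟩ := exists_mem_Ioc_zpow hM (one_lt_two)
      exact ⟨b, fun z hz => (zpow_le_zpow_iff_right₀ one_lt_two).1 (hb.le.trans hz.1)⟩) (by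
      have t1 : Tendsto (fun n : ℕ => (2:ℝ) ^ n) atTop atTop :=
        tendsto_pow_atTop_atTop_of_one_lt one_lt_two
      have t2 : Tendsto (fun n : ℕ => (a₁ / 2) ^ n * A 1) atTop atTop :=
        (tendsto_pow_atTop_atTop_of_one_lt (by linarith)).atTop_mul_const (hA.pos 1 one_pos)
      obtain ⟨n, hn1, hn2⟩ := ((t1.eventually_ge_atTop M).and (t2.eventually_ge_atTop L)).exists
      refine ⟨n, by simpa using hn1, hn2.trans ?_⟩
      have := hA.pow_mul_le n zero_le_one
      rw [mul_one] at this
      rw [zpow_natCast, le_div_iff₀ (by positivity), div_pow]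
      calc _ = a₁ ^ n * A 1 := by field_simp
        _ ≤ _ := this)
  refine ⟨j, hj1, hj2, ?_⟩
  by_contra! hcon
  have h3 : (2:ℝ) ^ j = 2 * 2 ^ (j - 1) := by
    rw [← zpow_one_add₀ two_ne_zero]; congr 1; ring
  have hp : (0:ℝ) < 2 ^ (j - 1) := by positivity
  have := hmin (j - 1) ⟨by linarith [hcon.1], ?_⟩
  · omega
  · have hd := (hA.doubling (2 ^ (j - 1)) hp.le).2
    have ha2 : 2 < a₂ := h2.trans_le hA.a₁_le_a₂
    rw [← h3] at hd
    have h4 : A (2 ^ j) / 2 ^ j ≤ a₂ * (A (2 ^ (j - 1)) / 2 ^ (j - 1)) := by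
      rw [← mul_div_assoc]
      refine div_le_div₀ ?_ hd hp (by rw [h3]; linarith)
      exact mul_nonneg (by linarith) (hA.nonneg hp.le)
    have := hcon.2.trans_le h4
    exact (lt_of_mul_lt_mul_left this (by linarith)).le

/-- The two-point form of the strict convexity of the Bellman function, which says that its second
differences dominate those of `± x y`. -/
lemma bell_gain (hA : IsYoung A a₁ a₂) (x y a b : ℝ) :
    2 * bell A (1 / (2 * a₂ ^ 2)) x y + 2 * ENNReal.ofReal |a * b| ≤
      bell A (1 / (2 * a₂ ^ 2)) (x + a) (y + b) + bell A (1 / (2 * a₂ ^ 2)) (x - a) (y - b) := by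
  have h2 := hA.two_lt
  have ha2 : 2 < a₂ := h2.trans_le hA.a₁_le_a₂
  set e := 1 / (2 * a₂ ^ 2) with he
  have he0 : 0 ≤ e := by positivity
  have hApos : ∀ j : ℤ, 0 < A (2 ^ j) := fun j => hA.pos _ (by positivity)
  -- only one scale is used for the gain
  obtain ⟨j₀, hj₀⟩ : ∃ j₀ : ℤ, ∀ j : ℤ,
      2 * (A (2 ^ j) * blk e (x / 2 ^ j) (y * 2 ^ j / A (2 ^ j)))
        + (if j = j₀ then 2 * |a * b| else 0) ≤
      A (2 ^ j) * blk e ((x + a) / 2 ^ j) ((y + b) * 2 ^ j / A (2 ^ j)) +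
      A (2 ^ j) * blk e ((x - a) / 2 ^ j) ((y - b) * 2 ^ j / A (2 ^ j)) := by
    have weak : ∀ j : ℤ, 2 * (A (2 ^ j) * blk e (x / 2 ^ j) (y * 2 ^ j / A (2 ^ j))) ≤
      A (2 ^ j) * blk e ((x + a) / 2 ^ j) ((y + b) * 2 ^ j / A (2 ^ j)) +
      A (2 ^ j) * blk e ((x - a) / 2 ^ j) ((y - b) * 2 ^ j / A (2 ^ j)) := by
      intro j
      have := blk_midpoint e (x / 2 ^ j) (y * 2 ^ j / A (2 ^ j)) (a / 2 ^ j) (b * 2 ^ j / A (2 ^ j))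
      rw [← add_div, ← sub_div, ← add_div, ← sub_div, ← add_mul, ← sub_mul] at this
      nlinarith [hApos j]
    by_cases hab : a * b = 0
    · refine ⟨0, fun j => ?_⟩
      simpa [hab] using weak j
    obtain ⟨ha0, hb0⟩ := mul_ne_zero_iff.1 hab
    obtain ⟨j, hjM, hjL, hor⟩ := hA.exists_scale (M := max |x| |a|) (L := max |y| |b|)
      (lt_max_of_lt_right (abs_pos.2 ha0))
    refine ⟨j, fun i => ?_⟩
    split_ifs with hij
    swap
    · simpa using weak i
    subst hij
    have hp : (0:ℝ) < 2 ^ i := by positivity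
    have hpA := hApos i
    have hq : ∀ t : ℝ, t * 2 ^ i / A (2 ^ i) = t / (A (2 ^ i) / 2 ^ i) := fun t => by
      field_simp
    have hB : 0 < A (2 ^ i) / 2 ^ i := by positivity
    have key := blk_gain (e := e) (x := x / 2 ^ i) (y := y * 2 ^ i / A (2 ^ i)) (a := a / 2 ^ i)
      (b := b * 2 ^ i / A (2 ^ i)) ?_ ?_ ?_ ?_ ?_ he0
    · rw [← add_div, ← sub_div, ← add_div, ← sub_div, ← add_mul, ← sub_mul] at key
      have e1 : A (2 ^ i) * |a / 2 ^ i * (b * 2 ^ i / A (2 ^ i))| = |a * b| := by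
        rw [show a / 2 ^ i * (b * 2 ^ i / A (2 ^ i)) = a * b / A (2 ^ i) by field_simp, abs_div,
          abs_of_pos hpA]
        field_simp
      nlinarith
    · rw [abs_div, abs_of_pos hp, div_le_one hp]; exact (le_max_left _ _).trans hjM
    · rw [hq, abs_div, abs_of_pos hB, div_le_one hB]; exact (le_max_left _ _).trans hjL
    · rw [abs_div, abs_of_pos hp, div_le_one hp]; exact (le_max_right _ _).trans hjM
    · rw [hq, abs_div, abs_of_pos hB, div_le_one hB]; exact (le_max_right _ _).trans hjL
    · have aux : ∀ s t B : ℝ, 0 < B → B ≤ a₂ * max |s| |t| →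
          2 * e ≤ (s / B) ^ 2 ∨ 2 * e ≤ (t / B) ^ 2 := by
        intro s t B hB h
        have : ∀ s : ℝ, B ≤ a₂ * |s| → 2 * e ≤ (s / B) ^ 2 := by
          intro s hs
          rw [div_pow, ← sq_abs s, le_div_iff₀ (by positivity), he]
          have : B ^ 2 ≤ (a₂ * |s|) ^ 2 := by gcongr
          rw [show 2 * (1 / (2 * a₂ ^ 2)) * B ^ 2 = B ^ 2 / a₂ ^ 2 by field_simp,
            div_le_iff₀ (by positivity)]
          linarith
        rcases max_cases |s| |t| with ⟨h', -⟩ | ⟨h', -⟩ <;> rw [h'] at h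
        · exact Or.inl (this _ h)
        · exact Or.inr (this _ h)
      rcases hor with h | h
      · rcases aux x a _ hp (h.trans (by gcongr)) with h | h
        · exact Or.inl h
        · exact Or.inr (Or.inr (Or.inl h))
      · rw [hq, hq]
        rcases aux y b _ hB h with h | h
        · exact Or.inr (Or.inl h)
        · exact Or.inr (Or.inr (Or.inr h))
  have hb : ∀ (j : ℤ) x y, 0 ≤ A (2 ^ j) * blk e x y :=
    fun j x y => mul_nonneg (hApos j).le (blk_nonneg _ _ _)
  calc _ = ∑' j : ℤ, (ENNReal.ofReal (2 * (A (2 ^ j) * blk e (x / 2 ^ j) (y * 2 ^ j / A (2 ^ j)))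
        + (if j = j₀ then 2 * |a * b| else 0))) := by
        rw [bell, ← ENNReal.tsum_mul_left, ← tsum_ite_eq j₀ (fun _ => 2 * ENNReal.ofReal |a * b|),
          ← ENNReal.tsum_add]
        refine tsum_congr fun j => ?_
        rw [ENNReal.ofReal_add (mul_nonneg zero_le_two (hb _ _ _)) (by positivity),
          ENNReal.ofReal_mul zero_le_two]
        congr 1
        · simp
        · split_ifs <;> simp [ENNReal.ofReal_mul]
    _ ≤ ∑' j : ℤ, (ENNReal.ofReal
          (A (2 ^ j) * blk e ((x + a) / 2 ^ j) ((y + b) * 2 ^ j / A (2 ^ j)) +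
            A (2 ^ j) * blk e ((x - a) / 2 ^ j) ((y - b) * 2 ^ j / A (2 ^ j)))) :=
        ENNReal.tsum_le_tsum fun j => ENNReal.ofReal_le_ofReal (hj₀ j)
    _ = _ := by
        rw [bell, bell, ← ENNReal.tsum_add]
        refine tsum_congr fun j => ?_
        rw [ENNReal.ofReal_add (hb _ _ _) (hb _ _ _)]

/-- The Bellman function is controlled by `A |x|` plus the conjugate Young function of `|y|`;
the latter is comparable to `A |u|` for `y = A |u| / u`. -/
lemma bell_le (hA : IsYoung A a₁ a₂) : ∃ C > 0, ∀ x u : ℝ,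
    bell A (1 / (2 * a₂ ^ 2)) x (A |u| / u) ≤ ENNReal.ofReal (C * (A |x| + A |u|)) := by
  have h2 := hA.two_lt
  have ha2 : 2 < a₂ := h2.trans_le hA.a₁_le_a₂
  set e := 1 / (2 * a₂ ^ 2) with he
  have he0 : 0 ≤ e := by positivity
  set ρ := 1 / (2 * a₂) with hρ
  have hρ0 : 0 < ρ := by positivity
  have hρ1 : ρ ≤ 1 := by rw [hρ, div_le_one (by positivity)]; linarith
  have hρe : 2 * ρ ^ 2 ≤ e := by rw [hρ, he]; apply le_of_eq; field_simp
  obtain ⟨k, hk1, hk2⟩ : ∃ k : ℕ, 1 / ρ ≤ 2 ^ k ∧ 1 / ρ ≤ (a₁ / 2) ^ k :=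
    (((tendsto_pow_atTop_atTop_of_one_lt one_lt_two).eventually_ge_atTop _).and
      ((tendsto_pow_atTop_atTop_of_one_lt (by linarith)).eventually_ge_atTop _)).exists
  set r := max (2 / a₁) (1 / 2) with hr
  have hr0 : 0 ≤ r := by positivity
  have hr1 : r < 1 := max_lt (by rw [div_lt_one (by linarith)]; exact h2) (by norm_num)
  set D : ℝ := 2 ^ k with hD
  have hD1 : 1 ≤ D := one_le_pow₀ one_le_two
  refine ⟨4 * (a₂ ^ k + D) * (1 - r)⁻¹, by have := sub_pos.2 hr1; positivity, fun x u => ?_⟩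
  set τ := max |x| |u| with hτ
  have hτA : A τ ≤ A |x| + A |u| := by
    have h1 := hA.nonneg (abs_nonneg x)
    have h2 := hA.nonneg (abs_nonneg u)
    rcases max_cases |x| |u| with ⟨h, -⟩ | ⟨h, -⟩ <;> rw [hτ, h] <;> linarith
  rcases (show 0 ≤ τ by positivity).eq_or_lt with h0 | h0
  · have hx : x = 0 := by
      have := le_max_left |x| |u|
      rw [← hτ, ← h0] at this
      exact abs_eq_zero.1 (le_antisymm this (abs_nonneg _))
    have hu : u = 0 := by
      have := le_max_right |x| |u|
      rw [← hτ, ← h0] at this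
      exact abs_eq_zero.1 (le_antisymm this (abs_nonneg _))
    have : ∀ j : ℤ, blk e (x / 2 ^ j) (A |u| / u * 2 ^ j / A (2 ^ j)) = 0 := by
      intro j
      apply blk_eq_zero hρ1 hρe <;> simp [hx, hu, hρ0.le]
    simp [bell, this]
  set y := A |u| / u with hy
  have hyτ : |y| ≤ A τ / τ := by
    rcases eq_or_ne u 0 with h | h
    · rw [hy, h]; simpa using div_nonneg (hA.nonneg h0.le) h0.le
    · rw [hy, abs_div, abs_of_nonneg (hA.nonneg (abs_nonneg u))]
      exact hA.div_mono (abs_pos.2 h) (le_max_right _ _)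
  have hxτ : |x| ≤ τ := le_max_left _ _
  obtain ⟨i, hi1, hi2⟩ := exists_mem_Ioc_zpow (show 0 < D * τ by positivity) one_lt_two
  have hApos : ∀ j : ℤ, 0 < A (2 ^ j) := fun j => hA.pos _ (by positivity)
  -- the blocks of large scale vanish at the point considered
  have hzero : ∀ j : ℤ, i < j → blk e (x / 2 ^ j) (y * 2 ^ j / A (2 ^ j)) = 0 := by
    intro j hij
    have hp : (0:ℝ) < 2 ^ j := by positivity
    have hpA := hApos j
    have hDj : D * τ ≤ 2 ^ j := hi2.trans (zpow_le_zpow_right₀ one_le_two (by omega))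
    apply blk_eq_zero hρ1 hρe
    · rw [abs_div, abs_of_pos hp, div_le_iff₀ hp]
      rw [div_le_iff₀ hρ0] at hk1
      nlinarith
    · have hB : 0 < A (2 ^ j) / 2 ^ j := by positivity
      rw [show y * 2 ^ j / A (2 ^ j) = y / (A (2 ^ j) / 2 ^ j) by field_simp, abs_div,
        abs_of_pos hB, div_le_iff₀ hB]
      have h3 := hA.div_mono (by positivity) hDj
      have h4 := hA.pow_mul_le k h0.le
      have h5 : (a₁ / 2) ^ k * (A τ / τ) ≤ A (D * τ) / (D * τ) := by
        rw [div_pow, ← hD, div_mul_div_comm]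
        gcongr
      have h6 : 0 ≤ A τ / τ := div_nonneg (hA.nonneg h0.le) h0.le
      rw [div_le_iff₀ hρ0] at hk2
      calc |y| ≤ A τ / τ := hyτ
        _ ≤ (a₁ / 2) ^ k * ρ * (A τ / τ) := le_mul_of_one_le_left h6 hk2
        _ = ρ * ((a₁ / 2) ^ k * (A τ / τ)) := by ring
        _ ≤ _ := by gcongr; exact h5.trans h3
  have hterm : ∀ n : ℕ, A (2 ^ (i - n)) *
      blk e (x / 2 ^ (i - n)) (y * 2 ^ (i - n) / A (2 ^ (i - n))) ≤
      r ^ n * (4 * (a₂ ^ k + D) * A τ) := by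
    intro n
    set s : ℝ := 2 ^ (i - (n:ℤ)) with hs
    have hs0 : 0 < s := by positivity
    have hsA := hA.pos s hs0
    have hsi : (2:ℝ) ^ n * s = 2 ^ i := by
      rw [hs, ← zpow_natCast, ← zpow_add₀ two_ne_zero]; congr 1; ring
    have hsD : s ≤ r ^ n * (D * τ) := by
      have : s = (1 / 2) ^ n * 2 ^ i := by
        rw [← hsi, ← mul_assoc, ← mul_pow]; norm_num
      rw [this]
      gcongr
      exact le_max_right _ _
    have hsB : A s / s ≤ r ^ n * (A (D * τ) / (D * τ)) := by
      have h3 := hA.pow_mul_le n hs0.le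
      rw [hsi] at h3
      have h4 : A s / s ≤ (2 / a₁) ^ n * (A (2 ^ i) / 2 ^ i) := by
        rw [← hsi] at h3 ⊢
        rw [div_pow, div_mul_div_comm, div_le_div_iff₀ hs0 (by positivity)]
        nlinarith [mul_le_mul_of_nonneg_left h3 (show 0 ≤ 2 ^ n * s by positivity)]
      refine h4.trans ?_
      have h5 := hA.div_mono (by positivity) hi1.le
      have h6 : (2 / a₁) ^ n ≤ r ^ n := by gcongr; exact le_max_left _ _
      have h7 := hApos i
      gcongr
    have h8 : A (D * τ) ≤ a₂ ^ k * A τ := hA.le_pow_mul k h0.le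
    have h9 : 0 ≤ A (D * τ) := hA.nonneg (by positivity)
    have h10 : 0 ≤ A τ := hA.nonneg h0.le
    calc _ ≤ A s * (4 * (|x / s| + |y * s / A s|)) := by gcongr; exact blk_le _ _ _ he0
      _ = 4 * (|x| * (A s / s) + |y| * s) := by
        rw [abs_div, abs_div, abs_mul, abs_of_pos hs0, abs_of_pos hsA]; field_simp
      _ ≤ 4 * (τ * (r ^ n * (A (D * τ) / (D * τ))) + A τ / τ * (r ^ n * (D * τ))) := by gcongr
      _ = r ^ n * (4 * (A (D * τ) / D + D * A τ)) := by field_simp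
      _ ≤ r ^ n * (4 * (A (D * τ) + D * A τ)) := by
        gcongr; exact div_le_self h9 hD1
      _ ≤ r ^ n * (4 * (a₂ ^ k * A τ + D * A τ)) := by gcongr
      _ = _ := by ring
  have hinj : Function.Injective fun n : ℕ => i - (n : ℤ) := fun m n h => by
    simp only at h; omega
  rw [bell, ← hinj.tsum_eq (by
    intro j hj
    by_contra hcon
    refine hj ?_
    have h : blk e (x / 2 ^ j) (y * 2 ^ j / A (2 ^ j)) = 0 := hzero j ?_
    · simp [h]
    · by_contra! h
      exact hcon ⟨(i - j).toNat, by simp only; omega⟩)]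
  have hAτ : 0 ≤ A τ := hA.nonneg h0.le
  calc _ ≤ ∑' n : ℕ, ENNReal.ofReal (r ^ n * (4 * (a₂ ^ k + D) * A τ)) :=
        ENNReal.tsum_le_tsum fun n => ENNReal.ofReal_le_ofReal (hterm n)
    _ = ENNReal.ofReal ((1 - r)⁻¹ * (4 * (a₂ ^ k + D) * A τ)) := by
        rw [← ENNReal.ofReal_tsum_of_nonneg (fun n => by positivity)
          ((summable_geometric_of_lt_one hr0 hr1).mul_right _), tsum_mul_right,
          tsum_geometric_of_lt_one hr0 hr1]
    _ ≤ _ := by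
        apply ENNReal.ofReal_le_ofReal
        have := sub_pos.2 hr1
        calc _ = 4 * (a₂ ^ k + D) * (1 - r)⁻¹ * A τ := by ring
          _ ≤ _ := by gcongr

end IsYoung

/-! ### Random walks -/

section Walk

variable {V : Type*} [NormedAddCommGroup V]

/-- One step of the symmetric random walk with increments `±v`. -/
noncomputable def avg (v : V) (f : V → ℝ) (x : V) : ℝ := (f (x + v) + f (x - v)) / 2

/-- The martingale difference belonging to `avg v f`. -/
noncomputable def dif (v : V) (f : V → ℝ) (x : V) : ℝ := (f (x + v) - f (x - v)) / 2

/-- The random walk that takes one step for each of the vectors of the list `l`. -/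
noncomputable def avgs (l : List V) (f : V → ℝ) : V → ℝ := l.foldr avg f

/-- `Q` is midpoint convex with a gain that dominates the product of the two increments. -/
def Gain (Q : ℝ → ℝ → ℝ≥0∞) : Prop :=
  ∀ x y a b, 2 * Q x y + 2 * ENNReal.ofReal |a * b| ≤ Q (x + a) (y + b) + Q (x - a) (y - b)

lemma continuous_avg (v : V) {f : V → ℝ} (hf : Continuous f) : Continuous (avg v f) := by
  unfold avg; fun_prop

lemma continuous_dif (v : V) {f : V → ℝ} (hf : Continuous f) : Continuous (dif v f) := by
  unfold dif; fun_prop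

lemma hasCompactSupport_avg (v : V) {f : V → ℝ} (hf : HasCompactSupport f) :
    HasCompactSupport (avg v f) := by
  have h1 : HasCompactSupport fun x => f (x + v) := hf.comp_homeomorph (Homeomorph.addRight v)
  have h2 : HasCompactSupport fun x => f (x - v) := hf.comp_homeomorph (Homeomorph.subRight v)
  have h3 := (h1.add h2).comp_left (g := fun t : ℝ => t / 2) (by simp)
  exact h3

lemma hasCompactSupport_dif (v : V) {f : V → ℝ} (hf : HasCompactSupport f) :
    HasCompactSupport (dif v f) := by
  have h1 : HasCompactSupport fun x => f (x + v) := hf.comp_homeomorph (Homeomorph.addRight v)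
  have h2 : HasCompactSupport fun x => f (x - v) := hf.comp_homeomorph (Homeomorph.subRight v)
  have h3 := (h1.sub h2).comp_left (g := fun t : ℝ => t / 2) (by simp)
  exact h3

lemma continuous_avgs (l : List V) {f : V → ℝ} (hf : Continuous f) : Continuous (avgs l f) := by
  induction l with
  | nil => exact hf
  | cons v l ih => exact continuous_avg v ih

lemma hasCompactSupport_avgs (l : List V) {f : V → ℝ} (hf : HasCompactSupport f) :
    HasCompactSupport (avgs l f) := by
  induction l with
  | nil => exact hf
  | cons v l ih => exact hasCompactSupport_avg v ih

/-- The full period of the walk with steps `v` and those listed in `l`. -/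
noncomputable def walk (v : V) (l : List V) (f : V → ℝ) : V → ℝ := avgs l (avg v f)

lemma continuous_walk (v : V) (l : List V) {f : V → ℝ} (hf : Continuous f) (n : ℕ) :
    Continuous ((walk v l)^[n] f) := by
  induction n with
  | zero => exact hf
  | succ n ih => rw [Function.iterate_succ_apply']; exact continuous_avgs l (continuous_avg v ih)

lemma hasCompactSupport_walk (v : V) (l : List V) {f : V → ℝ} (hf : HasCompactSupport f) (n : ℕ) :
    HasCompactSupport ((walk v l)^[n] f) := by
  induction n with
  | zero => exact hf
  | succ n ih =>
    rw [Function.iterate_succ_apply']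
    exact hasCompactSupport_avgs l (hasCompactSupport_avg v ih)

variable [MeasurableSpace V] [BorelSpace V] (μ : Measure V) [μ.IsAddRightInvariant]

/-- The mean of a function with midpoint gain decreases along a random walk, at a rate controlled
by the martingale differences. -/
lemma lintegral_avg {Q : ℝ → ℝ → ℝ≥0∞} (hQ : Gain Q)
    (hQm : Measurable fun p : ℝ × ℝ => Q p.1 p.2) (v : V) {f g : V → ℝ}
    (hf : Continuous f) (hg : Continuous g) :
    ∫⁻ x, Q (avg v f x) (avg v g x) ∂μ + ∫⁻ x, ENNReal.ofReal |dif v f x * dif v g x| ∂μ ≤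
      ∫⁻ x, Q (f x) (g x) ∂μ := by
  have hm : ∀ {f g : V → ℝ}, Continuous f → Continuous g → Measurable fun x => Q (f x) (g x) :=
    fun hf hg => hQm.comp (hf.measurable.prodMk hg.measurable)
  have hp : ∀ x, Q (avg v f x) (avg v g x) + ENNReal.ofReal |dif v f x * dif v g x| ≤
      2⁻¹ * (Q (f (x + v)) (g (x + v)) + Q (f (x - v)) (g (x - v))) := by
    intro x
    have h := hQ (avg v f x) (avg v g x) (dif v f x) (dif v g x)
    have e1 : ∀ f : V → ℝ, avg v f x + dif v f x = f (x + v) := fun f => by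
      simp only [avg, dif]; ring
    have e2 : ∀ f : V → ℝ, avg v f x - dif v f x = f (x - v) := fun f => by
      simp only [avg, dif]; ring
    rw [e1, e1, e2, e2, ← mul_add] at h
    rw [← ENNReal.div_eq_inv_mul, ENNReal.le_div_iff_mul_le (by simp) (by simp), mul_comm]
    exact h
  have hmf := continuous_avg v hf
  have hmg := continuous_avg v hg
  have h2 : (2⁻¹ : ℝ≥0∞) * 2 = 1 := ENNReal.inv_mul_cancel (by simp) (by simp)
  calc _ = ∫⁻ x, Q (avg v f x) (avg v g x) + ENNReal.ofReal |dif v f x * dif v g x| ∂μ :=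
        (lintegral_add_left (hm hmf hmg) _).symm
    _ ≤ ∫⁻ x, 2⁻¹ * (Q (f (x + v)) (g (x + v)) + Q (f (x - v)) (g (x - v))) ∂μ :=
        lintegral_mono hp
    _ = 2⁻¹ * (∫⁻ x, Q (f (x + v)) (g (x + v)) ∂μ + ∫⁻ x, Q (f (x - v)) (g (x - v)) ∂μ) := by
        rw [lintegral_const_mul _ (by
          exact (hm (f := fun x => f (x + v)) (g := fun x => g (x + v)) (by fun_prop)
            (by fun_prop)).add (hm (f := fun x => f (x - v)) (g := fun x => g (x - v))
            (by fun_prop) (by fun_prop))), lintegral_add_left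
          (hm (f := fun x => f (x + v)) (g := fun x => g (x + v)) (by fun_prop) (by fun_prop))]
    _ = ∫⁻ x, Q (f x) (g x) ∂μ := by
        rw [lintegral_add_right_eq_self (fun x => Q (f x) (g x)) v,
          lintegral_sub_right_eq_self (fun x => Q (f x) (g x)) v, ← two_mul, ← mul_assoc, h2,
          one_mul]

lemma lintegral_avgs {Q : ℝ → ℝ → ℝ≥0∞} (hQ : Gain Q)
    (hQm : Measurable fun p : ℝ × ℝ => Q p.1 p.2) (l : List V) {f g : V → ℝ}
    (hf : Continuous f) (hg : Continuous g) :
    ∫⁻ x, Q (avgs l f x) (avgs l g x) ∂μ ≤ ∫⁻ x, Q (f x) (g x) ∂μ := by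
  induction l with
  | nil => exact le_rfl
  | cons v l ih =>
    exact (le_self_add.trans
      (lintegral_avg μ hQ hQm v (continuous_avgs l hf) (continuous_avgs l hg))).trans ih

/-- Telescoping along the walk: the products of the martingale differences at the times of the
`v`-steps sum to a bounded quantity, with a bound independent of the number of periods. -/
lemma sum_lintegral_dif_le {Q : ℝ → ℝ → ℝ≥0∞} (hQ : Gain Q)
    (hQm : Measurable fun p : ℝ × ℝ => Q p.1 p.2) (v : V) (l : List V) {f g : V → ℝ}
    (hf : Continuous f) (hg : Continuous g) (N : ℕ) :
    ∑ n ∈ Finset.range N,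
        ∫⁻ x, ENNReal.ofReal |dif v ((walk v l)^[n] f) x * dif v ((walk v l)^[n] g) x| ∂μ ≤
      ∫⁻ x, Q (f x) (g x) ∂μ := by
  induction N generalizing f g with
  | zero => simp
  | succ N ih =>
    rw [Finset.sum_range_succ']
    simp only [Function.iterate_succ_apply, Function.iterate_zero, id]
    have hf' : Continuous (walk v l f) := continuous_walk v l hf 1
    have hg' : Continuous (walk v l g) := continuous_walk v l hg 1
    refine le_trans (add_le_add_left ((ih hf' hg').trans ?_) _) (lintegral_avg μ hQ hQm v hf hg)
    exact lintegral_avgs μ hQ hQm l (continuous_avg v hf) (continuous_avg v hg)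

end Walk

/-! ### Plancherel -/

section Fourier

open FourierTransform SchwartzMap ComplexConjugate
open scoped ContDiff RealInnerProductSpace

variable {V : Type*} [NormedAddCommGroup V] [InnerProductSpace ℝ V] [FiniteDimensional ℝ V]
  [MeasurableSpace V] [BorelSpace V]

/-- The Fourier transform of a real-valued function. -/
noncomputable def FT (f : V → ℝ) : V → ℂ := 𝓕 fun x => (f x : ℂ)

lemma integrable_ofReal {f : V → ℝ} (hf : Continuous f) (hc : HasCompactSupport f) :
    Integrable fun x => (f x : ℂ) :=
  (hf.integrable_of_hasCompactSupport hc).ofReal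

lemma memLp_ofReal {f : V → ℝ} (hf : Continuous f) (hc : HasCompactSupport f) :
    MemLp (fun x => (f x : ℂ)) 2 :=
  (hf.memLp_of_hasCompactSupport hc).ofReal

/-- The class in `L²` of a continuous function with compact support. -/
noncomputable def toL2 {f : V → ℝ} (hf : Continuous f) (hc : HasCompactSupport f) :
    Lp ℂ 2 (volume : Measure V) := (memLp_ofReal hf hc).toLp

lemma continuous_FT {f : V → ℝ} (hf : Continuous f) (hc : HasCompactSupport f) :
    Continuous (FT f) :=
  VectorFourier.fourierIntegral_continuous Real.continuous_fourierChar
    (by exact continuous_inner) (integrable_ofReal hf hc)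

/-- The Fourier transform on `L²` is given by the Fourier integral. -/
lemma FT_ae_eq {f : V → ℝ} (hf : Continuous f) (hc : HasCompactSupport f) :
    (𝓕 (toL2 hf hc) : Lp ℂ 2 (volume : Measure V)) =ᵐ[volume] FT f := by
  set F := toL2 hf hc with hF
  refine ae_eq_of_integral_contDiff_smul_eq ?_ (continuous_FT hf hc).locallyIntegrable ?_
  · exact ((Lp.memLp (𝓕 F : Lp ℂ 2 (volume : Measure V))).locallyIntegrable (by norm_num))
  intro g hg hgc
  have hg₂ : ContDiff ℝ ∞ fun x => (g x : ℂ) := Complex.ofRealCLM.contDiff.comp hg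
  have hg₁ : HasCompactSupport fun x => (g x : ℂ) := hgc.comp_left Complex.ofReal_zero
  let G : 𝓢(V, ℂ) := hg₁.toSchwartzMap hg₂
  have h1 := congrArg (fun T => T G) (Lp.fourier_toTemperedDistribution_eq F)
  simp only [TemperedDistribution.fourier_apply, Lp.toTemperedDistribution_apply] at h1
  have h2 : ∫ x, (𝓕 G) x • F x = ∫ x, 𝓕 (fun x => (g x : ℂ)) x * (f x : ℂ) := by
    refine integral_congr_ae ?_
    filter_upwards [(memLp_ofReal hf hc).coeFn_toLp] with x hx
    rw [hF, toL2, hx, SchwartzMap.fourier_coe]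
    rfl
  have h3 := VectorFourier.integral_fourierIntegral_smul_eq_flip (μ := volume) (ν := volume)
    (f := fun x => (g x : ℂ)) (g := fun x => (f x : ℂ)) (L := innerₗ V)
    Real.continuous_fourierChar (by exact continuous_inner)
    (integrable_ofReal hg.continuous hgc) (integrable_ofReal hf hc)
  rw [flip_innerₗ] at h3
  calc ∫ x, g x • (𝓕 F : Lp ℂ 2 (volume : Measure V)) x =
        ∫ x, G x • (𝓕 F : Lp ℂ 2 (volume : Measure V)) x := rfl
    _ = ∫ x, (𝓕 G) x • F x := h1.symm
    _ = ∫ x, (g x : ℂ) • FT f x := by rw [h2]; exact h3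
    _ = ∫ x, g x • FT f x := rfl

lemma integrable_FT_mul {f g : V → ℝ} (hf : Continuous f) (hfc : HasCompactSupport f)
    (hg : Continuous g) (hgc : HasCompactSupport g) :
    Integrable fun ξ => FT f ξ * conj (FT g ξ) := by
  have h1 : MemLp (FT f) 2 volume := (memLp_congr_ae (FT_ae_eq hf hfc)).1 (Lp.memLp _)
  have h2 : MemLp (FT g) 2 volume := (memLp_congr_ae (FT_ae_eq hg hgc)).1 (Lp.memLp _)
  exact h1.integrable_mul h2.star

/-- Plancherel's identity. -/
lemma integral_FT_mul {f g : V → ℝ} (hf : Continuous f) (hfc : HasCompactSupport f)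
    (hg : Continuous g) (hgc : HasCompactSupport g) :
    ∫ ξ, FT f ξ * conj (FT g ξ) = ((∫ x, f x * g x : ℝ) : ℂ) := by
  have h := Lp.inner_fourier_eq (E := V) (toL2 hg hgc)
    (toL2 hf hfc)
  rw [L2.inner_def, L2.inner_def] at h
  have e1 : ∀ᵐ ξ : V, inner ℂ ((𝓕 (toL2 hg hgc) : Lp ℂ 2 (volume : Measure V)) ξ)
      ((𝓕 (toL2 hf hfc) : Lp ℂ 2 (volume : Measure V)) ξ) =
        FT f ξ * conj (FT g ξ) := by
    filter_upwards [FT_ae_eq hf hfc, FT_ae_eq hg hgc] with ξ h1 h2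
    rw [h1, h2]; rfl
  have e2 : ∀ᵐ x : V, inner ℂ ((toL2 hg hgc) x)
      ((toL2 hf hfc) x) = ((f x * g x : ℝ) : ℂ) := by
    filter_upwards [(memLp_ofReal hf hfc).coeFn_toLp, (memLp_ofReal hg hgc).coeFn_toLp]
      with x h1 h2
    rw [toL2, toL2, h1, h2]; simp
  rw [integral_congr_ae e1, integral_congr_ae e2] at h
  rw [h]
  exact integral_ofReal

lemma FT_add_right (f : V → ℝ) (v ξ : V) :
    FT (fun x => f (x + v)) ξ = Real.fourierChar ⟪v, ξ⟫ * FT f ξ :=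
  congrFun (VectorFourier.fourierIntegral_comp_add_right Real.fourierChar volume (innerₗ V)
    (fun x => (f x : ℂ)) v) ξ

lemma fourierChar_eq (t : ℝ) : (Real.fourierChar t : ℂ) =
    Complex.cos ((2 * Real.pi * t : ℝ)) + Complex.sin ((2 * Real.pi * t : ℝ)) * Complex.I := by
  rw [Real.fourierChar_apply, Complex.exp_mul_I]

lemma integrable_add {f : V → ℝ} (hf : Continuous f) (hc : HasCompactSupport f) (v : V) :
    Integrable fun x => (f (x + v) : ℂ) :=
  (integrable_ofReal hf hc).comp_add_right v

lemma FT_add_sub (c c' : ℂ) {f : V → ℝ} (hf : Continuous f) (hc : HasCompactSupport f) (v ξ : V) :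
    𝓕 (fun x => c * (f (x + v) : ℂ) + c' * (f (x + -v) : ℂ)) ξ =
      (c * Real.fourierChar ⟪v, ξ⟫ + c' * Real.fourierChar (-⟪v, ξ⟫)) * FT f ξ := by
  have h0 := congrFun (VectorFourier.fourierIntegral_add (μ := volume) (L := innerₗ V)
    Real.continuous_fourierChar (by exact continuous_inner)
    ((integrable_add hf hc v).smul c) ((integrable_add hf hc (-v)).smul c')) ξ
  rw [Pi.add_apply, VectorFourier.fourierIntegral_const_smul,
    VectorFourier.fourierIntegral_const_smul] at h0
  have h1 : 𝓕 (fun x => c * (f (x + v) : ℂ) + c' * (f (x + -v) : ℂ)) ξ =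
      c • FT (fun x => f (x + v)) ξ + c' • FT (fun x => f (x + -v)) ξ := h0
  rw [FT_add_right, FT_add_right, inner_neg_left] at h1
  refine Eq.trans h1 ?_
  simp only [smul_eq_mul]
  ring

lemma FT_avg {f : V → ℝ} (hf : Continuous f) (hc : HasCompactSupport f) (v ξ : V) :
    FT (avg v f) ξ = (Real.cos (2 * Real.pi * ⟪v, ξ⟫) : ℂ) * FT f ξ := by
  have h : (fun x => (avg v f x : ℂ)) =
      fun x => (1 / 2 : ℂ) * (f (x + v) : ℂ) + (1 / 2 : ℂ) * (f (x + -v) : ℂ) := by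
    ext x; simp only [avg, ← sub_eq_add_neg]; push_cast; ring
  rw [FT, h, FT_add_sub _ _ hf hc, fourierChar_eq, fourierChar_eq]
  push_cast
  rw [mul_neg, Complex.cos_neg, Complex.sin_neg]
  ring

lemma FT_dif {f : V → ℝ} (hf : Continuous f) (hc : HasCompactSupport f) (v ξ : V) :
    FT (dif v f) ξ = (Real.sin (2 * Real.pi * ⟪v, ξ⟫) : ℂ) * Complex.I * FT f ξ := by
  have h : (fun x => (dif v f x : ℂ)) =
      fun x => (1 / 2 : ℂ) * (f (x + v) : ℂ) + (-(1 / 2) : ℂ) * (f (x + -v) : ℂ) := by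
    ext x; simp only [dif, ← sub_eq_add_neg]; push_cast; ring
  rw [FT, h, FT_add_sub _ _ hf hc, fourierChar_eq, fourierChar_eq]
  push_cast
  rw [mul_neg, Complex.cos_neg, Complex.sin_neg]
  ring

end Fourier

/-! ### Fourier multipliers obtained from random walks -/

section Multiplier

open ComplexConjugate
open scoped RealInnerProductSpace

variable {V : Type*} [NormedAddCommGroup V] [InnerProductSpace ℝ V] [FiniteDimensional ℝ V]
  [MeasurableSpace V] [BorelSpace V]

/-- The symbol of `walk v l`. -/
noncomputable def sym (v : V) (l : List V) (ξ : V) : ℝ :=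
  ((v :: l).map fun w => Real.cos (2 * Real.pi * ⟪w, ξ⟫)).prod

omit [FiniteDimensional ℝ V] [MeasurableSpace V] [BorelSpace V] in
lemma continuous_sym (v : V) (l : List V) : Continuous (sym v l) :=
  continuous_list_prod _ fun _ _ => by fun_prop

omit [FiniteDimensional ℝ V] [MeasurableSpace V] [BorelSpace V] in
lemma sym_sq_le (v : V) (l : List V) (ξ : V) :
    sym v l ξ ^ 2 ≤ 1 - Real.sin (2 * Real.pi * ⟪v, ξ⟫) ^ 2 := by
  have h : ∀ l : List V, (l.map fun w => Real.cos (2 * Real.pi * ⟪w, ξ⟫)).prod ^ 2 ≤ 1 := by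
    intro l
    induction l with
    | nil => simp
    | cons w l ih =>
      rw [List.map_cons, List.prod_cons, mul_pow]
      exact mul_le_one₀ (Real.cos_sq_le_one _) (sq_nonneg _) ih
  rw [← Real.cos_sq', sym, List.map_cons, List.prod_cons, mul_pow]
  exact mul_le_of_le_one_right (sq_nonneg _) (h l)

lemma FT_avgs (l : List V) {f : V → ℝ} (hf : Continuous f) (hc : HasCompactSupport f) (ξ : V) :
    FT (avgs l f) ξ = ((l.map fun w => Real.cos (2 * Real.pi * ⟪w, ξ⟫)).prod : ℝ) * FT f ξ := by
  induction l with
  | nil => simp [avgs]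
  | cons w l ih =>
    have h := FT_avg (continuous_avgs l hf) (hasCompactSupport_avgs l hc) w ξ
    rw [ih] at h
    refine Eq.trans h ?_
    rw [List.map_cons, List.prod_cons]
    push_cast
    ring

lemma FT_walk (v : V) (l : List V) {f : V → ℝ} (hf : Continuous f) (hc : HasCompactSupport f)
    (n : ℕ) (ξ : V) : FT ((walk v l)^[n] f) ξ = ((sym v l ξ) ^ n : ℝ) * FT f ξ := by
  induction n with
  | zero => simp
  | succ n ih =>
    rw [Function.iterate_succ_apply']
    have h1 := continuous_walk v l hf n
    have h2 := hasCompactSupport_walk v l hc n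
    rw [walk, FT_avgs l (continuous_avg v h1) (hasCompactSupport_avg v h2), FT_avg h1 h2, ih, sym,
      List.map_cons, List.prod_cons, pow_succ]
    push_cast
    ring

/-- The multiplier belonging to the martingale differences of the first `N` periods. -/
noncomputable def mulN (v : V) (l : List V) (N : ℕ) (ξ : V) : ℝ :=
  Real.sin (2 * Real.pi * ⟪v, ξ⟫) ^ 2 * ∑ n ∈ Finset.range N, (sym v l ξ ^ 2) ^ n

/-- The limit of `mulN v l N` as `N → ∞`. Where `sym v l ξ ^ 2 = 1`, the numerator vanishes. -/
noncomputable def mulInf (v : V) (l : List V) (ξ : V) : ℝ :=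
  Real.sin (2 * Real.pi * ⟪v, ξ⟫) ^ 2 / (1 - sym v l ξ ^ 2)

omit [FiniteDimensional ℝ V] [MeasurableSpace V] [BorelSpace V] in
lemma abs_mulN_le (v : V) (l : List V) (N : ℕ) (ξ : V) : |mulN v l N ξ| ≤ 1 := by
  have h := sym_sq_le v l ξ
  have h0 : 0 ≤ ∑ n ∈ Finset.range N, (sym v l ξ ^ 2) ^ n :=
    Finset.sum_nonneg fun _ _ => by positivity
  rw [mulN, abs_of_nonneg (mul_nonneg (sq_nonneg _) h0)]
  calc _ ≤ (1 - sym v l ξ ^ 2) * ∑ n ∈ Finset.range N, (sym v l ξ ^ 2) ^ n :=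
        mul_le_mul_of_nonneg_right (by linarith) h0
    _ = 1 - (sym v l ξ ^ 2) ^ N := mul_neg_geom_sum _ _
    _ ≤ 1 := by linarith [pow_nonneg (sq_nonneg (sym v l ξ)) N]

omit [FiniteDimensional ℝ V] [MeasurableSpace V] [BorelSpace V] in
lemma tendsto_mulN (v : V) (l : List V) (ξ : V) :
    Tendsto (fun N => mulN v l N ξ) atTop (𝓝 (mulInf v l ξ)) := by
  have h := sym_sq_le v l ξ
  by_cases h1 : sym v l ξ ^ 2 = 1
  · have h2 : Real.sin (2 * Real.pi * ⟪v, ξ⟫) ^ 2 = 0 := le_antisymm (by linarith) (sq_nonneg _)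
    simp [mulN, mulInf, h2]
  · have h2 : sym v l ξ ^ 2 < 1 :=
      lt_of_le_of_ne (by nlinarith [sq_nonneg (Real.sin (2 * Real.pi * ⟪v, ξ⟫))]) h1
    exact ((hasSum_geometric_of_lt_one (sq_nonneg _) h2).tendsto_sum_nat).const_mul _

omit [FiniteDimensional ℝ V] [MeasurableSpace V] [BorelSpace V] in
lemma abs_mulInf_le (v : V) (l : List V) (ξ : V) : |mulInf v l ξ| ≤ 1 :=
  le_of_tendsto (tendsto_mulN v l ξ).abs (Eventually.of_forall fun N => abs_mulN_le v l N ξ)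

/-- By Plancherel, the sum of the pairings of the martingale differences of `f` and `g` is the
bilinear form of the multiplier `mulN`. -/
lemma enorm_integral_mulN_le {Q : ℝ → ℝ → ℝ≥0∞} (hQ : Gain Q)
    (hQm : Measurable fun p : ℝ × ℝ => Q p.1 p.2) (v : V) (l : List V) {f g : V → ℝ}
    (hf : Continuous f) (hfc : HasCompactSupport f)
    (hg : Continuous g) (hgc : HasCompactSupport g) (N : ℕ) :
    ‖∫ ξ, (mulN v l N ξ : ℂ) * (FT f ξ * conj (FT g ξ))‖ₑ ≤ ∫⁻ x, Q (f x) (g x) := by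
  refine le_trans ?_ (sum_lintegral_dif_le volume hQ hQm v l hf hg N)
  set D : (V → ℝ) → ℕ → V → ℝ := fun f n => dif v ((walk v l)^[n] f) with hD
  have c1 : ∀ n, Continuous (D f n) := fun n => continuous_dif v (continuous_walk v l hf n)
  have c2 : ∀ n, Continuous (D g n) := fun n => continuous_dif v (continuous_walk v l hg n)
  have s1 : ∀ n, HasCompactSupport (D f n) :=
    fun n => hasCompactSupport_dif v (hasCompactSupport_walk v l hfc n)
  have s2 : ∀ n, HasCompactSupport (D g n) :=
    fun n => hasCompactSupport_dif v (hasCompactSupport_walk v l hgc n)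
  have e : ∀ ξ, (mulN v l N ξ : ℂ) * (FT f ξ * conj (FT g ξ)) =
      ∑ n ∈ Finset.range N, FT (D f n) ξ * conj (FT (D g n) ξ) := by
    intro ξ
    rw [mulN, Finset.mul_sum, Complex.ofReal_sum, Finset.sum_mul]
    refine Finset.sum_congr rfl fun n _ => ?_
    rw [hD, FT_dif (continuous_walk v l hf n) (hasCompactSupport_walk v l hfc n),
      FT_dif (continuous_walk v l hg n) (hasCompactSupport_walk v l hgc n), FT_walk v l hf hfc,
      FT_walk v l hg hgc]
    simp only [map_mul, Complex.conj_ofReal, Complex.conj_I]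
    push_cast
    ring_nf
    rw [Complex.I_sq]
    ring
  simp_rw [e]
  rw [integral_finsetSum _ fun n _ => integrable_FT_mul (c1 n) (s1 n) (c2 n) (s2 n)]
  refine (enorm_sum_le _ _).trans (Finset.sum_le_sum fun n _ => ?_)
  rw [integral_FT_mul (c1 n) (s1 n) (c2 n) (s2 n), ← ofReal_norm, Complex.norm_real,
    ofReal_norm]
  refine (enorm_integral_le_lintegral_enorm _).trans_eq ?_
  simp_rw [← ofReal_norm, Real.norm_eq_abs]
  rfl

lemma enorm_integral_le_of_tendsto {ι : Type*} {F : Filter ι} [F.NeBot] [F.IsCountablyGenerated]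
    {m : ι → V → ℝ} {m' : V → ℝ} {P : V → ℂ} (hP : Integrable P) (hm : ∀ n, Measurable (m n))
    (h1 : ∀ n ξ, |m n ξ| ≤ 1) (h2 : ∀ ξ, Tendsto (fun n => m n ξ) F (𝓝 (m' ξ))) {B : ℝ≥0∞}
    (hB : ∀ n, ‖∫ ξ, (m n ξ : ℂ) * P ξ‖ₑ ≤ B) : ‖∫ ξ, (m' ξ : ℂ) * P ξ‖ₑ ≤ B := by
  have h := tendsto_integral_filter_of_dominated_convergence (μ := volume) (l := F)
    (F := fun n ξ => (m n ξ : ℂ) * P ξ) (f := fun ξ => (m' ξ : ℂ) * P ξ) (fun ξ => ‖P ξ‖)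
    (Eventually.of_forall fun n =>
      (Complex.measurable_ofReal.comp (hm n)).aestronglyMeasurable.mul hP.aestronglyMeasurable)
    (Eventually.of_forall fun n => Eventually.of_forall fun ξ => by
      rw [norm_mul, Complex.norm_real]
      exact mul_le_of_le_one_left (norm_nonneg _) (h1 n ξ))
    hP.norm
    (Eventually.of_forall fun ξ =>
      ((Complex.continuous_ofReal.tendsto _).comp (h2 ξ)).mul_const _)
  exact le_of_tendsto ((continuous_enorm.tendsto _).comp h) (Eventually.of_forall hB)

omit [FiniteDimensional ℝ V] in
lemma measurable_mulN (v : V) (l : List V) (N : ℕ) : Measurable (mulN v l N) := by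
  have := continuous_sym v l
  unfold mulN
  exact Continuous.measurable (by fun_prop)

omit [FiniteDimensional ℝ V] in
lemma measurable_mulInf (v : V) (l : List V) : Measurable (mulInf v l) := by
  have := continuous_sym v l
  unfold mulInf
  exact (Continuous.measurable (by fun_prop)).div (Continuous.measurable (by fun_prop))

lemma tendsto_sin_div (a : ℝ) : Tendsto (fun h : ℝ => Real.sin (h * a) / h) (𝓝[≠] 0) (𝓝 a) := by
  have h : HasDerivAt (fun h : ℝ => Real.sin (h * a)) a 0 := by
    have := ((hasDerivAt_id (0 : ℝ)).mul_const a).sin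
    simpa using this
  have h2 := hasDerivAt_iff_tendsto_slope_zero.1 h
  refine h2.congr fun t => ?_
  simp [div_eq_inv_mul]

lemma tendsto_one_sub_prod (l : List ℝ) :
    Tendsto (fun h : ℝ => (1 - (l.map fun a => Real.cos (h * a)).prod ^ 2) / h ^ 2) (𝓝[≠] 0)
      (𝓝 (l.map fun a => a ^ 2).sum) := by
  induction l with
  | nil => simp
  | cons a l ih =>
    have hc : Tendsto (fun h : ℝ => Real.cos (h * a) ^ 2) (𝓝[≠] 0) (𝓝 1) := by
      have : Continuous fun h : ℝ => Real.cos (h * a) ^ 2 := by fun_prop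
      have h2 := this.tendsto 0
      simp only [zero_mul, Real.cos_zero, one_pow] at h2
      exact h2.mono_left nhdsWithin_le_nhds
    have h := ((tendsto_sin_div a).pow 2).add (hc.mul ih)
    rw [one_mul] at h
    rw [List.map_cons, List.sum_cons]
    refine h.congr fun t => ?_
    rw [List.map_cons, List.prod_cons, mul_pow, div_pow, Real.sin_sq]
    ring

/-- As the step size `h` of the walk with steps `h • v` and `h • w`, `w ∈ l`, tends to zero, the
multiplier `mulInf` tends to the quotient of quadratic forms in the statement. -/
lemma enorm_integral_mul_le {Q : ℝ → ℝ → ℝ≥0∞} (hQ : Gain Q)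
    (hQm : Measurable fun p : ℝ × ℝ => Q p.1 p.2) (v : V) (l : List V) {f g : V → ℝ}
    (hf : Continuous f) (hfc : HasCompactSupport f)
    (hg : Continuous g) (hgc : HasCompactSupport g) :
    ‖∫ ξ, ((⟪v, ξ⟫ ^ 2 / ((v :: l).map fun w => ⟪w, ξ⟫ ^ 2).sum : ℝ) : ℂ) *
      (FT f ξ * conj (FT g ξ))‖ₑ ≤ ∫⁻ x, Q (f x) (g x) := by
  have hP := integrable_FT_mul hf hfc hg hgc
  refine enorm_integral_le_of_tendsto (F := 𝓝[≠] (0 : ℝ))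
    (m := fun h => mulInf (h • v) (l.map fun w => h • w)) hP (fun h => measurable_mulInf _ _)
    (fun h => abs_mulInf_le _ _) (fun ξ => ?_) (fun h => ?_)
  swap
  · exact enorm_integral_le_of_tendsto (F := atTop) hP (fun N => measurable_mulN _ _ N)
      (fun N => abs_mulN_le _ _ N) (tendsto_mulN _ _)
      fun N => enorm_integral_mulN_le hQ hQm _ _ hf hfc hg hgc N
  have hs : ∀ h : ℝ, sym (h • v) (l.map fun w => h • w) ξ =
      (((v :: l).map fun w => 2 * Real.pi * ⟪w, ξ⟫).map fun a => Real.cos (h * a)).prod := by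
    intro h
    rw [sym, ← List.map_cons (f := fun w => h • w), List.map_map, List.map_map]
    refine congrArg List.prod (List.map_congr_left fun w _ => ?_)
    simp only [Function.comp, real_inner_smul_left]
    ring_nf
  have hsum : (((v :: l).map fun w => 2 * Real.pi * ⟪w, ξ⟫).map fun a => a ^ 2).sum =
      (2 * Real.pi) ^ 2 * ((v :: l).map fun w => ⟪w, ξ⟫ ^ 2).sum := by
    rw [List.map_map, ← List.sum_map_mul_left]
    refine congrArg List.sum (List.map_congr_left fun w _ => ?_)
    simp only [Function.comp]
    ring
  have h1 := tendsto_one_sub_prod ((v :: l).map fun w => 2 * Real.pi * ⟪w, ξ⟫)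
  have h2 := (tendsto_sin_div (2 * Real.pi * ⟪v, ξ⟫)).pow 2
  have hpi : (2 * Real.pi) ^ 2 ≠ 0 := by positivity
  by_cases h0 : ((v :: l).map fun w => ⟪w, ξ⟫ ^ 2).sum = 0
  · have hv : ⟪v, ξ⟫ = 0 := by
      have h3 : 0 ≤ (l.map fun w => ⟪w, ξ⟫ ^ 2).sum :=
        List.sum_nonneg fun x hx => by
          obtain ⟨w, -, rfl⟩ := List.mem_map.1 hx
          positivity
      rw [List.map_cons, List.sum_cons] at h0
      exact pow_eq_zero_iff (two_ne_zero) |>.1 (le_antisymm (by linarith) (sq_nonneg _))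
    simp [mulInf, real_inner_smul_left, hv]
  · have h3 := h2.div h1 (by rw [hsum]; exact mul_ne_zero hpi h0)
    rw [hsum, mul_pow, mul_div_mul_left _ _ hpi] at h3
    refine h3.congr' ?_
    filter_upwards [self_mem_nhdsWithin] with h hh
    have hh' : h ^ 2 ≠ 0 := pow_ne_zero _ hh
    rw [mulInf, hs, Pi.div_apply, div_pow, div_div_div_cancel_right₀ hh', real_inner_smul_left]
    ring_nf

end Multiplier

/-! ### Second-order Riesz transforms on Orlicz spaces -/

section Riesz

open ComplexConjugate
open scoped RealInnerProductSpace

variable {d : ℕ}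

/-- The vectors `e_i + e_j` and `e_i - e_j`. -/
noncomputable def vec (p : Fin d × Fin d × Bool) : EuclideanSpace ℝ (Fin d) :=
  EuclideanSpace.single p.1 1 + (if p.2.2 then (1 : ℝ) else -1) • EuclideanSpace.single p.2.1 1

lemma inner_vec (p : Fin d × Fin d × Bool) (ξ : EuclideanSpace ℝ (Fin d)) :
    ⟪vec p, ξ⟫ = ξ p.1 + (if p.2.2 then (1 : ℝ) else -1) * ξ p.2.1 := by
  rw [vec, inner_add_left, real_inner_smul_left, EuclideanSpace.inner_single_left,
    EuclideanSpace.inner_single_left]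
  simp

lemma sum_inner_vec (ξ : EuclideanSpace ℝ (Fin d)) :
    ∑ p : Fin d × Fin d × Bool, ⟪vec p, ξ⟫ ^ 2 = 4 * d * ‖ξ‖ ^ 2 := by
  have h : ∀ i j : Fin d, (ξ i + ξ j) ^ 2 + (ξ i + -ξ j) ^ 2 = 2 * ξ i ^ 2 + 2 * ξ j ^ 2 :=
    fun i j => by ring
  simp_rw [inner_vec, Fintype.sum_prod_type, Fintype.sum_bool]
  simp only [if_true, Bool.false_eq_true, if_false, one_mul, neg_one_mul, h,
    Finset.sum_add_distrib, Finset.sum_const, ← Finset.mul_sum, Finset.card_univ, Fintype.card_fin,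
    EuclideanSpace.real_norm_sq_eq, nsmul_eq_mul]
  ring

lemma enorm_integral_vec_le {Q : ℝ → ℝ → ℝ≥0∞} (hQ : Gain Q)
    (hQm : Measurable fun p : ℝ × ℝ => Q p.1 p.2) (p : Fin d × Fin d × Bool)
    {f g : EuclideanSpace ℝ (Fin d) → ℝ} (hf : Continuous f) (hfc : HasCompactSupport f)
    (hg : Continuous g) (hgc : HasCompactSupport g) :
    ‖∫ ξ, ((⟪vec p, ξ⟫ ^ 2 / (4 * d * ‖ξ‖ ^ 2) : ℝ) : ℂ) * (FT f ξ * conj (FT g ξ))‖ₑ ≤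
      ∫⁻ x, Q (f x) (g x) := by
  have h := enorm_integral_mul_le hQ hQm (vec p) ((Finset.univ.erase p).toList.map vec)
    hf hfc hg hgc
  have e : ∀ ξ : EuclideanSpace ℝ (Fin d),
      ((vec p :: (Finset.univ.erase p).toList.map vec).map fun w => ⟪w, ξ⟫ ^ 2).sum =
        4 * d * ‖ξ‖ ^ 2 := by
    intro ξ
    rw [← sum_inner_vec, ← Finset.add_sum_erase _ _ (Finset.mem_univ p), List.map_cons,
      List.sum_cons, List.map_map, ← Finset.sum_map_toList]
    rfl
  simp_rw [e] at h
  exact h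

/-- The bilinear form of the second-order Riesz transform with symbol `ξ_i ξ_j / |ξ|²` is
controlled by every function with midpoint gain. -/
lemma enorm_riesz_le {Q : ℝ → ℝ → ℝ≥0∞} (hQ : Gain Q)
    (hQm : Measurable fun p : ℝ × ℝ => Q p.1 p.2) (i j : Fin d)
    {f g : EuclideanSpace ℝ (Fin d) → ℝ} (hf : Continuous f) (hfc : HasCompactSupport f)
    (hg : Continuous g) (hgc : HasCompactSupport g) :
    ‖∫ ξ, ((ξ i * ξ j / ‖ξ‖ ^ 2 : ℝ) : ℂ) * (FT f ξ * conj (FT g ξ))‖ₑ ≤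
      2 * d * ∫⁻ x, Q (f x) (g x) := by
  have hd : (d : ℝ) ≠ 0 := by
    have : 0 < d := i.pos
    positivity
  have hP := integrable_FT_mul hf hfc hg hgc
  have hb : ∀ p : Fin d × Fin d × Bool, ∀ ξ : EuclideanSpace ℝ (Fin d),
      |⟪vec p, ξ⟫ ^ 2 / (4 * d * ‖ξ‖ ^ 2)| ≤ 1 := by
    intro p ξ
    rw [← sum_inner_vec, abs_of_nonneg (by positivity)]
    exact div_le_one_of_le₀
      (Finset.single_le_sum (f := fun p => ⟪vec p, ξ⟫ ^ 2) (fun _ _ => sq_nonneg _)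
        (Finset.mem_univ p)) (by positivity)
  have hi : ∀ p : Fin d × Fin d × Bool, Integrable fun ξ : EuclideanSpace ℝ (Fin d) =>
      ((⟪vec p, ξ⟫ ^ 2 / (4 * d * ‖ξ‖ ^ 2) : ℝ) : ℂ) * (FT f ξ * conj (FT g ξ)) := by
    intro p
    refine hP.bdd_mul (c := 1) ?_ (Eventually.of_forall fun ξ => ?_)
    · exact (Complex.measurable_ofReal.comp
        ((Continuous.measurable (by fun_prop)).div
          (Continuous.measurable (by fun_prop)))).aestronglyMeasurable
    · rw [Complex.norm_real]; exact hb p ξ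
  have e : ∀ ξ : EuclideanSpace ℝ (Fin d),
      ((ξ i * ξ j / ‖ξ‖ ^ 2 : ℝ) : ℂ) * (FT f ξ * conj (FT g ξ)) =
        d * (((⟪vec (i, j, true), ξ⟫ ^ 2 / (4 * d * ‖ξ‖ ^ 2) : ℝ) : ℂ) *
            (FT f ξ * conj (FT g ξ)) -
          ((⟪vec (i, j, false), ξ⟫ ^ 2 / (4 * d * ‖ξ‖ ^ 2) : ℝ) : ℂ) *
            (FT f ξ * conj (FT g ξ))) := by
    intro ξ
    have key : ξ i * ξ j / ‖ξ‖ ^ 2 = d * (⟪vec (i, j, true), ξ⟫ ^ 2 / (4 * d * ‖ξ‖ ^ 2) -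
        ⟪vec (i, j, false), ξ⟫ ^ 2 / (4 * d * ‖ξ‖ ^ 2)) := by
      rw [inner_vec, inner_vec]
      simp only [if_true, Bool.false_eq_true, if_false, one_mul, neg_one_mul]
      rcases eq_or_ne (‖ξ‖) 0 with h0 | h0
      · simp [h0]
      · field_simp
        ring
    rw [key]
    push_cast
    ring
  simp_rw [e]
  rw [integral_const_mul, integral_sub (hi _) (hi _), enorm_mul, two_mul, add_mul, ← mul_add]
  have hdn : ‖(d : ℂ)‖ₑ = d := by
    rw [← ofReal_norm, Complex.norm_natCast, ENNReal.ofReal_natCast]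
  rw [hdn]
  gcongr
  exact (enorm_sub_le).trans (add_le_add (enorm_integral_vec_le hQ hQm _ hf hfc hg hgc)
    (enorm_integral_vec_le hQ hQm _ hf hfc hg hgc))

lemma FT_const_mul (K : ℝ) (f : EuclideanSpace ℝ (Fin d) → ℝ) (ξ : EuclideanSpace ℝ (Fin d)) :
    FT (fun x => K * f x) ξ = K * FT f ξ := by
  have h := congrFun (VectorFourier.fourierIntegral_const_smul Real.fourierChar volume
    (innerₗ (EuclideanSpace ℝ (Fin d))) (fun x => (f x : ℂ)) (K : ℂ)) ξ
  refine Eq.trans ?_ h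
  unfold FT
  push_cast
  rfl

variable {A : ℝ → ℝ} {a₁ a₂ : ℝ}

lemma IsYoung.continuous_comp (hA : IsYoung A a₁ a₂) {u : EuclideanSpace ℝ (Fin d) → ℝ}
    (hu : Continuous u) : Continuous fun x => A |u x| := hA.continuous_abs.comp hu

lemma IsYoung.integrable_comp (hA : IsYoung A a₁ a₂) {u : EuclideanSpace ℝ (Fin d) → ℝ}
    (hu : Continuous u) (hc : HasCompactSupport u) : Integrable fun x => A |u x| :=
  (hA.continuous_comp hu).integrable_of_hasCompactSupport
    (hc.comp_left (g := fun t => A |t|) (by simp [hA.zero]))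

/-- Singular integral operators that are linear combinations of second-order Riesz transforms obey
modular estimates: `u` is paired with `g = A |u| / u`, the Bellman function bounds the pairing by
`∑ ∫ A |K F a| + ∫ A |u|` with a factor `O(1 / K)`, and the last term is absorbed for large `K`. -/
lemma IsYoung.exists_modular (hA : IsYoung A a₁ a₂) {ι : Type*} [Fintype ι] (i j : ι → Fin d)
    (c : ι → ℝ) : ∃ K > 0, ∀ (u : EuclideanSpace ℝ (Fin d) → ℝ)
      (F : ι → EuclideanSpace ℝ (Fin d) → ℝ), Continuous u → HasCompactSupport u →
      (∀ a, Continuous (F a)) → (∀ a, HasCompactSupport (F a)) →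
      (∀ ξ, FT u ξ = ∑ a, (c a : ℂ) * ((ξ (i a) * ξ (j a) / ‖ξ‖ ^ 2 : ℝ) : ℂ) * FT (F a) ξ) →
      ∫ x, A |u x| ≤ ∑ a, ∫ x, A |K * F a x| := by
  obtain ⟨C, hC, hbell⟩ := hA.bell_le
  set S : ℝ := ∑ a, |c a| with hS
  have hS0 : 0 ≤ S := Finset.sum_nonneg fun _ _ => abs_nonneg _
  set m : ℝ := (Fintype.card ι : ℝ) with hm
  have hm0 : 0 ≤ m := Nat.cast_nonneg _
  -- With this `K`, the coefficient in front of `∫ A |u|` below is at most `1 / 2`.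
  set K : ℝ := 4 * d * C * S * (m + 1) + 1 with hK
  have hK0 : 0 < K := by positivity
  refine ⟨K, hK0, fun u F hu huc hF hFc hFT => ?_⟩
  set g : EuclideanSpace ℝ (Fin d) → ℝ := fun x => A |u x| / u x with hg
  have hgc : Continuous g := hA.continuous_dual.comp hu
  have hgs : HasCompactSupport g := huc.comp_left (g := fun t => A |t| / t) (by simp)
  have hug : ∀ x, u x * g x = A |u x| := by
    intro x
    by_cases h : u x = 0
    · simp [h, hA.zero]
    · exact mul_div_cancel₀ _ h
  have hcK : ∀ a, Continuous fun x => K * F a x := fun a => (hF a).const_mul K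
  have hsK : ∀ a, HasCompactSupport fun x => K * F a x := fun a =>
    (hFc a).comp_left (g := fun t => K * t) (by simp)
  set I : ℝ := ∫ x, A |u x| with hI
  set J : ι → ℝ := fun a => ∫ x, A |K * F a x| with hJ
  have hI0 : 0 ≤ I := integral_nonneg fun x => hA.nonneg (abs_nonneg _)
  have hJ0 : ∀ a, 0 ≤ J a := fun a => integral_nonneg fun x => hA.nonneg (abs_nonneg _)
  set R : ι → ℂ := fun a => ∫ ξ : EuclideanSpace ℝ (Fin d),
    ((ξ (i a) * ξ (j a) / ‖ξ‖ ^ 2 : ℝ) : ℂ) * (FT (fun x => K * F a x) ξ * conj (FT g ξ)) with hR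
  have hRle : ∀ a, ‖R a‖ ≤ 2 * d * (C * (J a + I)) := by
    intro a
    have h1 := enorm_riesz_le (fun x y a b => hA.bell_gain x y a b) (measurable_bell A _) (i a)
      (j a) (hcK a) (hsK a) hgc hgs
    have hint : Integrable fun x => C * (A |K * F a x| + A |u x|) :=
      ((hA.integrable_comp (hcK a) (hsK a)).add (hA.integrable_comp hu huc)).const_mul C
    have h2 : ∫⁻ x, bell A (1 / (2 * a₂ ^ 2)) (K * F a x) (g x) ≤
        ENNReal.ofReal (C * (J a + I)) := by
      refine (lintegral_mono fun x => hbell (K * F a x) (u x)).trans_eq ?_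
      rw [← ofReal_integral_eq_lintegral_ofReal hint (Eventually.of_forall fun x =>
        mul_nonneg hC.le (add_nonneg (hA.nonneg (abs_nonneg _)) (hA.nonneg (abs_nonneg _))))]
      congr 1
      rw [integral_const_mul]
      congr 1
      exact integral_add (hA.integrable_comp (hcK a) (hsK a)) (hA.integrable_comp hu huc)
    have h3 : ‖R a‖ₑ ≤ ENNReal.ofReal (2 * d * (C * (J a + I))) := by
      refine h1.trans ((mul_le_mul_right h2 _).trans_eq ?_)
      rw [ENNReal.ofReal_mul (p := 2 * d) (by positivity),
        ENNReal.ofReal_mul (p := 2) (by positivity), ENNReal.ofReal_natCast, ENNReal.ofReal_ofNat]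
    rw [← ofReal_norm] at h3
    exact (ENNReal.ofReal_le_ofReal_iff (by
      have := hJ0 a
      positivity)).1 h3
  have hIR : (I : ℂ) = ∑ a, ((c a / K : ℝ) : ℂ) * R a := by
    have h1 := integral_FT_mul hu huc hgc hgs
    simp_rw [hug] at h1
    rw [← hI] at h1
    rw [← h1]
    have hint : ∀ a, Integrable fun ξ : EuclideanSpace ℝ (Fin d) =>
        ((c a / K : ℝ) : ℂ) * (((ξ (i a) * ξ (j a) / ‖ξ‖ ^ 2 : ℝ) : ℂ) *
          (FT (fun x => K * F a x) ξ * conj (FT g ξ))) := by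
      intro a
      refine Integrable.const_mul ?_ _
      refine (integrable_FT_mul (hcK a) (hsK a) hgc hgs).bdd_mul (c := 1) ?_
        (Eventually.of_forall fun ξ => ?_)
      · exact (Complex.measurable_ofReal.comp
          ((Continuous.measurable (by fun_prop)).div
            (Continuous.measurable (by fun_prop)))).aestronglyMeasurable
      · rw [Complex.norm_real, norm_div, norm_mul, norm_pow, norm_norm]
        refine div_le_one_of_le₀ ?_ (by positivity)
        rw [sq]
        exact mul_le_mul (PiLp.norm_apply_le ξ _) (PiLp.norm_apply_le ξ _) (norm_nonneg _)
          (norm_nonneg _)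
    simp_rw [hR, ← integral_const_mul]
    rw [← integral_finsetSum _ fun a _ => hint a]
    refine integral_congr_ae (Eventually.of_forall fun ξ => ?_)
    simp only
    rw [hFT, Finset.sum_mul]
    refine Finset.sum_congr rfl fun a _ => ?_
    rw [FT_const_mul]
    have hKc : (K : ℂ) ≠ 0 := Complex.ofReal_ne_zero.2 hK0.ne'
    push_cast
    field_simp
  have h4 : I ≤ 2 * d * C * S / K * (∑ a, J a + m * I) := by
    calc I = ‖(I : ℂ)‖ := by rw [Complex.norm_real, Real.norm_of_nonneg hI0]
      _ ≤ ∑ a, ‖((c a / K : ℝ) : ℂ) * R a‖ := by rw [hIR]; exact norm_sum_le _ _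
      _ ≤ ∑ a, S / K * (2 * d * (C * (J a + I))) := by
        refine Finset.sum_le_sum fun a _ => ?_
        rw [norm_mul, Complex.norm_real, Real.norm_eq_abs, abs_div, abs_of_pos hK0]
        have h5 : |c a| ≤ S :=
          Finset.single_le_sum (f := fun a => |c a|) (fun _ _ => abs_nonneg _) (Finset.mem_univ a)
        exact mul_le_mul (by gcongr) (hRle a) (norm_nonneg _) (by positivity)
      _ = 2 * d * C * S / K * (∑ a, J a + m * I) := by
        rw [← Finset.mul_sum, ← Finset.mul_sum, ← Finset.mul_sum, Finset.sum_add_distrib,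
          Finset.sum_const, Finset.card_univ, nsmul_eq_mul]
        ring
  have hJs : 0 ≤ ∑ a, J a := Finset.sum_nonneg fun a _ => hJ0 a
  have h6 : I * K ≤ 2 * d * C * S * (∑ a, J a + m * I) := by
    rw [div_mul_eq_mul_div, le_div_iff₀ hK0] at h4
    exact h4
  have h7 : 0 ≤ 2 * d * C * S := by positivity
  set q : ℝ := 2 * d * C * S with hq
  have hKq : K = 2 * q * (m + 1) + 1 := by rw [hK, hq]; ring
  rw [hKq] at h6
  by_contra hcon
  push Not at hcon
  nlinarith [mul_nonneg h7 hm0, mul_nonneg (mul_nonneg h7 hm0) hI0, mul_nonneg h7 hI0,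
    mul_nonneg h7 (sub_nonneg.2 hcon.le)]

end Riesz

/-! ### The symbols of the Korn operator -/

section Korn

open FourierTransform
open scoped RealInnerProductSpace

variable {d : ℕ}

/-- The traceless part of the symmetric part of a square matrix. -/
noncomputable def devMat (G : Matrix (Fin d) (Fin d) ℝ) : Matrix (Fin d) (Fin d) ℝ :=
  (2 : ℝ)⁻¹ • (G + Gᵀ) - (Matrix.trace G / d) • 1

lemma devMat_apply (G : Matrix (Fin d) (Fin d) ℝ) (i j : Fin d) :
    devMat G i j = 1 / 2 * G i j + 1 / 2 * G j i - (if i = j then (d : ℝ)⁻¹ else 0) * G.trace := by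
  rw [devMat, Matrix.sub_apply, Matrix.smul_apply, Matrix.add_apply, Matrix.transpose_apply,
    Matrix.smul_apply, Matrix.one_apply]
  split_ifs <;> simp <;> ring

lemma frobNorm_eq (M : Matrix (Fin d) (Fin d) ℝ) : frobNorm M = √(∑ i, ∑ j, M i j ^ 2) := by
  rw [frobNorm, Matrix.trace, Finset.sum_comm]
  simp [Matrix.mul_apply, sq]

lemma frobNorm_nonneg (M : Matrix (Fin d) (Fin d) ℝ) : 0 ≤ frobNorm M := Real.sqrt_nonneg _

lemma frobNorm_zero : frobNorm (0 : Matrix (Fin d) (Fin d) ℝ) = 0 := by simp [frobNorm_eq]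

lemma devMat_zero : devMat (0 : Matrix (Fin d) (Fin d) ℝ) = 0 := by simp [devMat]

lemma abs_le_frobNorm (M : Matrix (Fin d) (Fin d) ℝ) (i j : Fin d) : |M i j| ≤ frobNorm M := by
  rw [frobNorm_eq]
  refine Real.abs_le_sqrt ?_
  refine (Finset.single_le_sum (f := fun j => M i j ^ 2) (fun _ _ => sq_nonneg _)
    (Finset.mem_univ j)).trans ?_
  exact Finset.single_le_sum (f := fun i => ∑ j, M i j ^ 2)
    (fun _ _ => Finset.sum_nonneg fun _ _ => sq_nonneg _) (Finset.mem_univ i)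

lemma exists_frobNorm_le (hd : 2 ≤ d) (M : Matrix (Fin d) (Fin d) ℝ) :
    ∃ i j, frobNorm M ≤ d * |M i j| := by
  have : Nonempty (Fin d) := ⟨⟨0, by omega⟩⟩
  obtain ⟨⟨i, j⟩, h⟩ := Finite.exists_max fun p : Fin d × Fin d => |M p.1 p.2|
  refine ⟨i, j, ?_⟩
  rw [frobNorm_eq]
  refine Real.sqrt_le_iff.2 ⟨by positivity, ?_⟩
  calc ∑ i', ∑ j', M i' j' ^ 2 ≤ ∑ _i' : Fin d, ∑ _j' : Fin d, |M i j| ^ 2 :=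
        Finset.sum_le_sum fun i' _ => Finset.sum_le_sum fun j' _ => by
          rw [← sq_abs]; exact pow_le_pow_left₀ (abs_nonneg _) (h (i', j')) 2
    _ = (d * |M i j|) ^ 2 := by simp [mul_pow]; ring

lemma continuous_frobNorm : Continuous (frobNorm : Matrix (Fin d) (Fin d) ℝ → ℝ) := by
  unfold frobNorm; fun_prop

lemma continuous_devMat : Continuous (devMat : Matrix (Fin d) (Fin d) ℝ → _) := by
  unfold devMat; fun_prop

variable {w : EuclideanSpace ℝ (Fin d) → EuclideanSpace ℝ (Fin d)}

lemma continuous_gradMat (hw : ContDiff ℝ 1 w) : Continuous (gradMat w) := by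
  have h := hw.continuous_fderiv one_ne_zero
  unfold gradMat
  exact continuous_matrix fun i j => by fun_prop

lemma hasCompactSupport_gradMat (hc : HasCompactSupport w) : HasCompactSupport (gradMat w) :=
  (hc.fderiv ℝ).comp_left (g := fun L : EuclideanSpace ℝ (Fin d) →L[ℝ] EuclideanSpace ℝ (Fin d) =>
    ((fun i j => L (EuclideanSpace.single j 1) i : Matrix (Fin d) (Fin d) ℝ))) rfl

lemma FT_gradMat (hw : ContDiff ℝ 1 w) (hc : HasCompactSupport w) (i k : Fin d)
    (ξ : EuclideanSpace ℝ (Fin d)) : FT (fun x => gradMat w x i k) ξ =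
      2 * Real.pi * Complex.I * ξ k * FT (fun x => w x i) ξ := by
  set φ : EuclideanSpace ℝ (Fin d) → ℂ := fun x => ((w x i : ℝ) : ℂ) with hφ
  let P : EuclideanSpace ℝ (Fin d) →L[ℝ] ℂ := Complex.ofRealCLM.comp (EuclideanSpace.proj i)
  have hφw : φ = P ∘ w := rfl
  have hφ1 : ContDiff ℝ 1 φ := P.contDiff.comp hw
  have hφc : HasCompactSupport φ := hc.comp_left (map_zero P)
  have hfd : ∀ x, fderiv ℝ φ x (EuclideanSpace.single k 1) = (gradMat w x i k : ℂ) := by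
    intro x
    have h := (P.hasFDerivAt.comp x (hw.differentiable one_ne_zero x).hasFDerivAt).fderiv
    rw [hφw, h]
    rfl
  have hint : Integrable (fderiv ℝ φ) :=
    (hφ1.continuous_fderiv one_ne_zero).integrable_of_hasCompactSupport (hφc.fderiv ℝ)
  have h1 := Real.fourier_fderiv (hφ1.continuous.integrable_of_hasCompactSupport hφc)
    (hφ1.differentiable one_ne_zero) hint
  have h2 := congrArg (fun T => T (EuclideanSpace.single k (1 : ℝ))) (congrFun h1 ξ)
  simp only [Real.fourier_continuousLinearMap_apply hint, hfd] at h2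
  refine Eq.trans h2 ?_
  rw [VectorFourier.fourierSMulRight_apply]
  have hin : innerSL ℝ ξ (EuclideanSpace.single k (1 : ℝ)) = ξ k := by
    rw [innerSL_apply_apply ℝ, EuclideanSpace.inner_single_right]
    simp
  rw [_root_.neg_apply, _root_.neg_apply, hin, FT]
  simp only [neg_smul, Complex.real_smul, smul_eq_mul]
  ring

lemma FT_add {f g : EuclideanSpace ℝ (Fin d) → ℝ} (hf : Integrable f) (hg : Integrable g)
    (ξ : EuclideanSpace ℝ (Fin d)) : FT (fun x => f x + g x) ξ = FT f ξ + FT g ξ := by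
  have hf' : Integrable fun x => (f x : ℂ) := hf.ofReal
  have hg' : Integrable fun x => (g x : ℂ) := hg.ofReal
  have h := congrFun (VectorFourier.fourierIntegral_add (μ := volume)
    (L := innerₗ (EuclideanSpace ℝ (Fin d))) Real.continuous_fourierChar
    (by exact continuous_inner) hf' hg') ξ
  refine Eq.trans ?_ h
  unfold FT
  push_cast
  rfl

lemma FT_sum {ι : Type*} (s : Finset ι) {f : ι → EuclideanSpace ℝ (Fin d) → ℝ}
    (hf : ∀ a, Integrable (f a)) (ξ : EuclideanSpace ℝ (Fin d)) :
    FT (fun x => ∑ a ∈ s, f a x) ξ = ∑ a ∈ s, FT (f a) ξ := by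
  classical
  induction s using Finset.induction_on with
  | empty => simpa using FT_const_mul 0 0 ξ
  | insert a s ha ih =>
    simp_rw [Finset.sum_insert ha]
    rw [FT_add (hf a) (integrable_finsetSum s fun a _ => hf a), ih]

lemma integrable_gradMat (hw : ContDiff ℝ 1 w) (hc : HasCompactSupport w) (i k : Fin d) :
    Integrable fun x => gradMat w x i k :=
  ((continuous_gradMat hw).matrix_elem i k).integrable_of_hasCompactSupport
    ((hasCompactSupport_gradMat hc).comp_left (g := fun M : Matrix (Fin d) (Fin d) ℝ => M i k) rfl)

lemma FT_trace (hw : ContDiff ℝ 1 w) (hc : HasCompactSupport w) (ξ : EuclideanSpace ℝ (Fin d)) :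
    FT (fun x => (gradMat w x).trace) ξ =
      2 * Real.pi * Complex.I * ∑ l, ξ l * FT (fun x => w x l) ξ := by
  have h := FT_sum Finset.univ (f := fun l x => gradMat w x l l)
    (fun l => integrable_gradMat hw hc l l) ξ
  refine Eq.trans h ?_
  rw [Finset.mul_sum]
  exact Finset.sum_congr rfl fun l _ => by rw [FT_gradMat hw hc]; ring

lemma FT_devMat (hw : ContDiff ℝ 1 w) (hc : HasCompactSupport w) (i j : Fin d)
    (ξ : EuclideanSpace ℝ (Fin d)) :
    FT (fun x => devMat (gradMat w x) i j) ξ =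
      Real.pi * Complex.I * (ξ j * FT (fun x => w x i) ξ + ξ i * FT (fun x => w x j) ξ) -
        (if i = j then (d : ℂ)⁻¹ else 0) * FT (fun x => (gradMat w x).trace) ξ := by
  have ht : Integrable fun x => (gradMat w x).trace :=
    integrable_finsetSum _ fun l _ => integrable_gradMat hw hc l l
  have e : (fun x => devMat (gradMat w x) i j) = fun x => (1 / 2 * gradMat w x i j +
      1 / 2 * gradMat w x j i) + -(if i = j then (d : ℝ)⁻¹ else 0) * (gradMat w x).trace := by
    ext x; rw [devMat_apply]; ring
  have h1 := (integrable_gradMat hw hc i j).const_mul (1 / 2)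
  have h2 := (integrable_gradMat hw hc j i).const_mul (1 / 2)
  have h12 : Integrable fun x => 1 / 2 * gradMat w x i j + 1 / 2 * gradMat w x j i := h1.add h2
  rw [e]
  refine (FT_add h12 (ht.const_mul _) ξ).trans ?_
  rw [FT_add h1 h2, FT_const_mul, FT_const_mul, FT_const_mul,
    FT_gradMat hw hc, FT_gradMat hw hc]
  split_ifs <;> push_cast <;> ring

lemma sum_sq_div (ξ : EuclideanSpace ℝ (Fin d)) (hξ : ξ ≠ 0) :
    ∑ j, (ξ j : ℂ) * ξ j / (‖ξ‖ : ℂ) ^ 2 = 1 := by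
  rw [← Finset.sum_div]
  have h : ∑ j, (ξ j : ℂ) * ξ j = (‖ξ‖ : ℂ) ^ 2 := by
    rw [← Complex.ofReal_pow, EuclideanSpace.real_norm_sq_eq]
    push_cast
    exact Finset.sum_congr rfl fun j _ => by ring
  rw [h, div_self]
  simpa using hξ

/-- The divergence is a combination of second-order Riesz transforms of the traceless symmetric
gradient. -/
lemma FT_trace_eq (hd : 2 ≤ d) (hw : ContDiff ℝ 1 w) (hc : HasCompactSupport w)
    (ξ : EuclideanSpace ℝ (Fin d)) :
    FT (fun x => (gradMat w x).trace) ξ = ∑ p : Fin d × Fin d, ((d / (d - 1) : ℝ) : ℂ) *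
      ((ξ p.1 * ξ p.2 / ‖ξ‖ ^ 2 : ℝ) : ℂ) * FT (fun x => devMat (gradMat w x) p.1 p.2) ξ := by
  rcases eq_or_ne ξ 0 with rfl | hξ
  · rw [FT_trace hw hc]; simp
  have hd0 : (d : ℂ) ≠ 0 := by
    have : d ≠ 0 := by omega
    exact_mod_cast this
  have hd1 : (d : ℂ) - 1 ≠ 0 := by
    have : d ≠ 1 := by omega
    rw [sub_ne_zero]
    exact_mod_cast this
  have hn : (‖ξ‖ : ℂ) ≠ 0 := by simpa using hξ
  have hT := FT_trace hw hc ξ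
  have h1 := sum_sq_div ξ hξ
  have hS : ∑ i, ∑ j, ((ξ i : ℂ) * ξ j / (‖ξ‖ : ℂ) ^ 2) * (Real.pi * Complex.I *
      (ξ j * FT (fun x => w x i) ξ + ξ i * FT (fun x => w x j) ξ)) =
        FT (fun x => (gradMat w x).trace) ξ := by
    have e1 : ∀ i j : Fin d, ((ξ i : ℂ) * ξ j / (‖ξ‖ : ℂ) ^ 2) * (Real.pi * Complex.I *
      (ξ j * FT (fun x => w x i) ξ + ξ i * FT (fun x => w x j) ξ)) =
        Real.pi * Complex.I * ((ξ i * FT (fun x => w x i) ξ) * (ξ j * ξ j / (‖ξ‖ : ℂ) ^ 2)) +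
        Real.pi * Complex.I * ((ξ i * ξ i / (‖ξ‖ : ℂ) ^ 2) * (ξ j * FT (fun x => w x j) ξ)) :=
      fun i j => by ring
    simp_rw [e1, Finset.sum_add_distrib, ← Finset.mul_sum, h1, mul_one]
    rw [← Finset.sum_mul, h1, hT]
    ring
  have hS2 : ∑ i, ∑ j, ((ξ i : ℂ) * ξ j / (‖ξ‖ : ℂ) ^ 2) * ((if i = j then (d : ℂ)⁻¹ else 0) *
      FT (fun x => (gradMat w x).trace) ξ) = (d : ℂ)⁻¹ * FT (fun x => (gradMat w x).trace) ξ := by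
    simp only [ite_mul, zero_mul, mul_ite, mul_zero, Finset.sum_ite_eq, Finset.mem_univ, if_true]
    rw [← Finset.sum_mul, h1, one_mul]
  simp only [FT_devMat hw hc, Fintype.sum_prod_type]
  simp only [mul_assoc ((d / (d - 1) : ℝ) : ℂ), ← Finset.mul_sum]
  push_cast
  simp_rw [mul_sub, Finset.sum_sub_distrib]
  rw [hS, hS2]
  field_simp

/-- The gradient is a combination of second-order Riesz transforms of the traceless symmetric
gradient and of the divergence. -/
lemma FT_gradMat_eq (hw : ContDiff ℝ 1 w) (hc : HasCompactSupport w) (i k : Fin d)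
    (ξ : EuclideanSpace ℝ (Fin d)) :
    FT (fun x => gradMat w x i k) ξ =
      ∑ a : Option (Fin d), ((a.elim (2 / d - 1) fun _ => 2 : ℝ) : ℂ) *
        ((ξ k * ξ (a.elim i id) / ‖ξ‖ ^ 2 : ℝ) : ℂ) *
        FT (a.elim (fun x => (gradMat w x).trace) fun j x => devMat (gradMat w x) i j) ξ := by
  rcases eq_or_ne ξ 0 with rfl | hξ
  · rw [FT_gradMat hw hc]; simp
  have h1 := sum_sq_div ξ hξ
  have hT := FT_trace hw hc ξ
  rw [Fintype.sum_option]
  simp only [Option.elim, id]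
  simp_rw [FT_devMat hw hc]
  push_cast
  have e : ∀ j : Fin d, 2 * ((ξ k : ℂ) * ξ j / (‖ξ‖ : ℂ) ^ 2) * (Real.pi * Complex.I *
      (ξ j * FT (fun x => w x i) ξ + ξ i * FT (fun x => w x j) ξ) -
        (if i = j then (d : ℂ)⁻¹ else 0) * FT (fun x => (gradMat w x).trace) ξ) =
      2 * Real.pi * Complex.I * ξ k * FT (fun x => w x i) ξ * (ξ j * ξ j / (‖ξ‖ : ℂ) ^ 2) +
      (ξ k * ξ i / (‖ξ‖ : ℂ) ^ 2) * (2 * Real.pi * Complex.I * (ξ j * FT (fun x => w x j) ξ)) -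
      (if i = j then 2 * (d : ℂ)⁻¹ * ((ξ k : ℂ) * ξ i / (‖ξ‖ : ℂ) ^ 2) *
        FT (fun x => (gradMat w x).trace) ξ else 0) := by
    intro j
    split_ifs with h
    · subst h; ring
    · ring
  simp_rw [e, Finset.sum_sub_distrib, Finset.sum_add_distrib, ← Finset.mul_sum]
  rw [h1, ← hT, Finset.sum_ite_eq, if_pos (Finset.mem_univ _), FT_gradMat hw hc]
  ring

end Korn

/-! ### The Korn inequality -/

section Final

variable {d : ℕ} {A : ℝ → ℝ} {a₁ a₂ : ℝ}

lemma integrable_frobNorm {w : EuclideanSpace ℝ (Fin d) → EuclideanSpace ℝ (Fin d)}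
    (hA : IsYoung A a₁ a₂) (hw : ContDiff ℝ 1 w) (hc : HasCompactSupport w) (M : ℝ) :
    Integrable fun x => A |M * frobNorm (devMat (gradMat w x))| := by
  refine hA.integrable_comp (continuous_const.mul
    (continuous_frobNorm.comp (continuous_devMat.comp (continuous_gradMat hw)))) ?_
  exact (hasCompactSupport_gradMat hc).comp_left
    (g := fun G : Matrix (Fin d) (Fin d) ℝ => M * frobNorm (devMat G))
    (by simp [devMat_zero, frobNorm_zero])

lemma integral_entry_le {w : EuclideanSpace ℝ (Fin d) → EuclideanSpace ℝ (Fin d)}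
    (hA : IsYoung A a₁ a₂) (hw : ContDiff ℝ 1 w) (hc : HasCompactSupport w) {t M : ℝ}
    (ht : |t| ≤ M) (i j : Fin d) :
    ∫ x, A |t * devMat (gradMat w x) i j| ≤
      ∫ x, A |M * frobNorm (devMat (gradMat w x))| := by
  have hM : 0 ≤ M := (abs_nonneg t).trans ht
  refine integral_mono (hA.integrable_comp (continuous_const.mul
    ((continuous_devMat.comp (continuous_gradMat hw)).matrix_elem i j)) ?_)
    (integrable_frobNorm hA hw hc M) fun x => ?_
  · exact (hasCompactSupport_gradMat hc).comp_left
      (g := fun G : Matrix (Fin d) (Fin d) ℝ => t * devMat G i j) (by simp [devMat_zero])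
  · refine hA.mono (mem_Ici.2 (abs_nonneg _)) (mem_Ici.2 (abs_nonneg _)) ?_
    rw [abs_mul, abs_mul, abs_of_nonneg hM, abs_of_nonneg (frobNorm_nonneg _)]
    exact mul_le_mul ht (abs_le_frobNorm _ i j) (abs_nonneg _) hM

lemma continuous_trace_gradMat {w : EuclideanSpace ℝ (Fin d) → EuclideanSpace ℝ (Fin d)}
    (hw : ContDiff ℝ 1 w) : Continuous fun x => (gradMat w x).trace :=
  (continuous_gradMat hw).matrix_trace

lemma hasCompactSupport_trace {w : EuclideanSpace ℝ (Fin d) → EuclideanSpace ℝ (Fin d)}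
    (hc : HasCompactSupport w) : HasCompactSupport fun x => (gradMat w x).trace :=
  (hasCompactSupport_gradMat hc).comp_left
    (g := fun G : Matrix (Fin d) (Fin d) ℝ => G.trace) (by simp)

lemma continuous_devMat_gradMat {w : EuclideanSpace ℝ (Fin d) → EuclideanSpace ℝ (Fin d)}
    (hw : ContDiff ℝ 1 w) (i j : Fin d) : Continuous fun x => devMat (gradMat w x) i j :=
  (continuous_devMat.comp (continuous_gradMat hw)).matrix_elem i j

lemma hasCompactSupport_devMat {w : EuclideanSpace ℝ (Fin d) → EuclideanSpace ℝ (Fin d)}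
    (hc : HasCompactSupport w) (i j : Fin d) :
    HasCompactSupport fun x => devMat (gradMat w x) i j :=
  (hasCompactSupport_gradMat hc).comp_left
    (g := fun G : Matrix (Fin d) (Fin d) ℝ => devMat G i j) (by simp [devMat_zero])

/-- Every multiple of the divergence is controlled by the traceless symmetric gradient. -/
lemma IsYoung.exists_trace_le (hA : IsYoung A a₁ a₂) (hd : 2 ≤ d) :
    ∃ K > 0, ∀ w : EuclideanSpace ℝ (Fin d) → EuclideanSpace ℝ (Fin d), ContDiff ℝ 1 w →
      HasCompactSupport w → ∀ t : ℝ, ∀ M : ℝ, |K * t| ≤ M →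
      ∫ x, A |t * (gradMat w x).trace| ≤
        (d : ℝ) ^ 2 * ∫ x, A |M * frobNorm (devMat (gradMat w x))| := by
  obtain ⟨K, hK, h⟩ := hA.exists_modular (d := d) (fun p : Fin d × Fin d => p.1) (fun p => p.2)
    (fun _ => (d / (d - 1) : ℝ))
  refine ⟨K, hK, fun w hw hc t M hM => ?_⟩
  refine (h (fun x => t * (gradMat w x).trace) (fun p x => t * devMat (gradMat w x) p.1 p.2)
    (continuous_const.mul (continuous_trace_gradMat hw)) (hasCompactSupport_trace hc).mul_left
    (fun p => continuous_const.mul (continuous_devMat_gradMat hw p.1 p.2))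
    (fun p => (hasCompactSupport_devMat hc p.1 p.2).mul_left) fun ξ => ?_).trans ?_
  · simp only [FT_const_mul]
    rw [FT_trace_eq hd hw hc, Finset.mul_sum]
    exact Finset.sum_congr rfl fun p _ => by ring
  · refine (Finset.sum_le_sum fun p _ => (?_ : _ ≤
      ∫ x, A |M * frobNorm (devMat (gradMat w x))|)).trans_eq ?_
    · simp only [← mul_assoc]
      exact integral_entry_le hA hw hc hM p.1 p.2
    · simp [sq]

/-- Every multiple of an entry of the gradient is controlled by the traceless symmetric
gradient. -/
lemma IsYoung.exists_gradMat_le (hA : IsYoung A a₁ a₂) (hd : 2 ≤ d) (i k : Fin d) :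
    ∃ K, ∀ w : EuclideanSpace ℝ (Fin d) → EuclideanSpace ℝ (Fin d), ContDiff ℝ 1 w →
      HasCompactSupport w → ∀ M : ℝ, K ≤ M → ∫ x, A |d * gradMat w x i k| ≤
        ((d : ℝ) ^ 2 + d) * ∫ x, A |M * frobNorm (devMat (gradMat w x))| := by
  obtain ⟨K₁, hK₁, h₁⟩ := hA.exists_trace_le hd
  obtain ⟨K, hK, h⟩ := hA.exists_modular (d := d) (fun _ : Option (Fin d) => k)
    (fun a => a.elim i id) (fun a => a.elim (2 / d - 1) fun _ => 2)
  refine ⟨max (K₁ * (K * d)) (K * d), fun w hw hc M hM => ?_⟩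
  have hM₁ : |K₁ * (K * d)| ≤ M := by
    rw [abs_of_nonneg (by positivity)]; exact (le_max_left _ _).trans hM
  have hM₂ : |K * d| ≤ M := by
    rw [abs_of_nonneg (by positivity)]; exact (le_max_right _ _).trans hM
  refine (h (fun x => d * gradMat w x i k) (fun a x => d * a.elim (fun x => (gradMat w x).trace)
      (fun j x => devMat (gradMat w x) i j) x)
    (continuous_const.mul ((continuous_gradMat hw).matrix_elem i k))
    ((hasCompactSupport_gradMat hc).comp_left
      (g := fun G : Matrix (Fin d) (Fin d) ℝ => d * G i k) (by simp)) ?_ ?_ fun ξ => ?_).trans ?_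
  · rintro (_ | j)
    · exact continuous_const.mul (continuous_trace_gradMat hw)
    · exact continuous_const.mul (continuous_devMat_gradMat hw i j)
  · rintro (_ | j)
    · exact (hasCompactSupport_trace hc).mul_left
    · exact (hasCompactSupport_devMat hc i j).mul_left
  · simp only [FT_const_mul]
    rw [FT_gradMat_eq hw hc, Finset.mul_sum]
    exact Finset.sum_congr rfl fun p _ => by ring
  · rw [Fintype.sum_option, add_mul]
    simp only [Option.elim, ← mul_assoc]
    refine add_le_add (h₁ w hw hc _ M hM₁) ((Finset.sum_le_sum fun j _ =>
      integral_entry_le hA hw hc hM₂ i j).trans_eq ?_)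
    simp

/-- The Korn inequality on the whole space. -/
lemma IsYoung.exists_korn (hA : IsYoung A a₁ a₂) (hd : 2 ≤ d) :
    ∃ c > (0 : ℝ), ∀ w : EuclideanSpace ℝ (Fin d) → EuclideanSpace ℝ (Fin d), ContDiff ℝ 1 w →
      HasCompactSupport w → ∫ x, A (frobNorm (gradMat w x)) ≤
        ∫ x, A (c * frobNorm (devMat (gradMat w x))) := by
  choose K hK using fun p : Fin d × Fin d => hA.exists_gradMat_le hd p.1 p.2
  set M : ℝ := 1 + ∑ p, |K p| with hMdef
  have hMK : ∀ p, K p ≤ M := fun p => by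
    have := Finset.single_le_sum (f := fun p => |K p|) (fun _ _ => abs_nonneg _)
      (Finset.mem_univ p)
    have := le_abs_self (K p)
    simp only [hMdef] at *
    linarith
  have hM : 0 < M := by positivity
  have hd1 : (1 : ℝ) ≤ d := by
    have : 1 ≤ d := by omega
    exact_mod_cast this
  set N : ℝ := (d : ℝ) ^ 2 * ((d : ℝ) ^ 2 + d) with hNdef
  have hN : 1 ≤ N := by nlinarith [one_le_pow₀ hd1 (n := 2)]
  refine ⟨N * M, by positivity, fun w hw hc => ?_⟩
  have hint : ∀ p : Fin d × Fin d, Integrable fun x => A |d * gradMat w x p.1 p.2| := fun p =>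
    hA.integrable_comp (continuous_const.mul ((continuous_gradMat hw).matrix_elem p.1 p.2))
      ((hasCompactSupport_gradMat hc).comp_left
        (g := fun G : Matrix (Fin d) (Fin d) ℝ => d * G p.1 p.2) (by simp))
  have hle : ∀ x, A (frobNorm (gradMat w x)) ≤
      ∑ p : Fin d × Fin d, A |d * gradMat w x p.1 p.2| := fun x => by
    obtain ⟨i, j, hij⟩ := exists_frobNorm_le hd (gradMat w x)
    have hij' : frobNorm (gradMat w x) ≤ |d * gradMat w x i j| := by
      rwa [abs_mul, Nat.abs_cast]
    refine le_trans (hA.mono (frobNorm_nonneg _) (mem_Ici.2 (abs_nonneg _)) hij') ?_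
    exact Finset.single_le_sum (f := fun p : Fin d × Fin d => A |d * gradMat w x p.1 p.2|)
      (fun _ _ => hA.nonneg (abs_nonneg _)) (Finset.mem_univ (i, j))
  have habs : ∀ x, |N * M * frobNorm (devMat (gradMat w x))| =
      N * M * frobNorm (devMat (gradMat w x)) := fun x =>
    abs_of_nonneg (mul_nonneg (by positivity) (frobNorm_nonneg _))
  calc ∫ x, A (frobNorm (gradMat w x))
      ≤ ∫ x, ∑ p : Fin d × Fin d, A |d * gradMat w x p.1 p.2| :=
        integral_mono_of_nonneg (ae_of_all _ fun x => hA.nonneg (frobNorm_nonneg _))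
          (integrable_finsetSum _ fun p _ => hint p) (ae_of_all _ hle)
    _ = ∑ p : Fin d × Fin d, ∫ x, A |d * gradMat w x p.1 p.2| :=
        integral_finsetSum _ fun p _ => hint p
    _ ≤ ∑ _p : Fin d × Fin d, ((d : ℝ) ^ 2 + d) *
          ∫ x, A |M * frobNorm (devMat (gradMat w x))| :=
        Finset.sum_le_sum fun p _ => hK p w hw hc M (hMK p)
    _ = N * ∫ x, A |M * frobNorm (devMat (gradMat w x))| := by
        simp [hNdef]; ring
    _ = ∫ x, N * A |M * frobNorm (devMat (gradMat w x))| := (integral_const_mul _ _).symm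
    _ ≤ ∫ x, A |N * M * frobNorm (devMat (gradMat w x))| := by
        refine integral_mono ((integrable_frobNorm hA hw hc M).const_mul N)
          (integrable_frobNorm hA hw hc (N * M)) fun x => ?_
        refine (hA.mul_le hN (abs_nonneg _)).trans_eq ?_
        rw [mul_assoc N, abs_mul N, abs_of_pos (by positivity : 0 < N)]
    _ = ∫ x, A (N * M * frobNorm (devMat (gradMat w x))) := by simp_rw [habs]

/-- A function satisfying the doubling condition that vanishes somewhere on `(0, ∞)` vanishes on
`[0, ∞)`. -/
lemma eq_zero_of_doubling (hmono : MonotoneOn A (Set.Ici 0)) (hnn : ∀ z ≥ (0 : ℝ), 0 ≤ A z)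
    (hΔ : ∀ z ≥ (0 : ℝ), A (2 * z) ≤ a₂ * A z) {z₀ : ℝ} (hz₀ : 0 < z₀) (h₀ : A z₀ = 0) {z : ℝ}
    (hz : 0 ≤ z) : A z = 0 := by
  have hn : ∀ n : ℕ, A (2 ^ n * z₀) = 0 := fun n => by
    induction n with
    | zero => simpa using h₀
    | succ n ih =>
      refine le_antisymm ?_ (hnn _ (by positivity))
      have := hΔ (2 ^ n * z₀) (by positivity)
      rw [ih, mul_zero] at this
      rwa [pow_succ', mul_assoc]
  obtain ⟨n, hlt⟩ := pow_unbounded_of_one_lt (z / z₀) (one_lt_two)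
  refine le_antisymm ?_ (hnn z hz)
  rw [← hn n]
  exact hmono hz (by simp only [Set.mem_Ici]; positivity) ((div_le_iff₀ hz₀).1 hlt.le)

lemma gradMat_eq_zero {w : EuclideanSpace ℝ (Fin d) → EuclideanSpace ℝ (Fin d)}
    {x : EuclideanSpace ℝ (Fin d)} (hx : x ∉ tsupport w) : gradMat w x = 0 := by
  have h : fderiv ℝ w x = 0 :=
    image_eq_zero_of_notMem_tsupport fun h => hx (tsupport_fderiv_subset ℝ h)
  ext i j
  simp [gradMat, h]

end Final

end OrliczKorn

/-- Orlicz-space Korn inequality of Breit–Cianchi–Diening for Young functions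
satisfying the Δ²₂-condition, for compactly supported C¹ vector fields. -/
theorem stmt_16 (d : ℕ) (hd : 2 ≤ d) (Ω : Set (EuclideanSpace ℝ (Fin d)))
    (hΩo : IsOpen Ω) (hΩb : Bornology.IsBounded Ω)
    (A : ℝ → ℝ) (hconv : ConvexOn ℝ (Set.Ici 0) A) (hmono : MonotoneOn A (Set.Ici 0))
    (hA0 : A 0 = 0) (hnn : ∀ z ≥ (0:ℝ), 0 ≤ A z)
    (a₁ a₂ : ℝ) (ha₁ : 2 < a₁)
    (hΔ : ∀ z ≥ (0:ℝ), a₁ * A z ≤ A (2 * z) ∧ A (2 * z) ≤ a₂ * A z) :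
    ∃ c > (0:ℝ), ∀ w : EuclideanSpace ℝ (Fin d) → EuclideanSpace ℝ (Fin d),
      ContDiff ℝ 1 w → HasCompactSupport w → tsupport w ⊆ Ω →
      ∫ x in Ω, A (frobNorm (gradMat w x)) ≤
        ∫ x in Ω, A (c * frobNorm
          ((2:ℝ)⁻¹ • (gradMat w x + (gradMat w x)ᵀ)
            - (Matrix.trace (gradMat w x) / d) • 1)) := by
  by_cases hpos : ∀ z, 0 < z → 0 < A z
  · have hA : OrliczKorn.IsYoung A a₁ a₂ := ⟨hconv, hmono, hA0, hpos, ha₁, hΔ⟩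
    obtain ⟨c, hc, h⟩ := hA.exists_korn hd
    refine ⟨c, hc, fun w hw hcs hsupp => ?_⟩
    have hz : ∀ x, x ∉ Ω → gradMat w x = 0 := fun x hx =>
      OrliczKorn.gradMat_eq_zero fun h => hx (hsupp h)
    rw [setIntegral_eq_integral_of_forall_compl_eq_zero fun x hx => by
        rw [hz x hx, OrliczKorn.frobNorm_zero, hA0]]
    refine (h w hw hcs).trans_eq (Eq.symm ?_)
    exact setIntegral_eq_integral_of_forall_compl_eq_zero
      (f := fun x => A (c * frobNorm (OrliczKorn.devMat (gradMat w x)))) fun x hx => by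
        rw [hz x hx, OrliczKorn.devMat_zero, OrliczKorn.frobNorm_zero, mul_zero, hA0]
  · push Not at hpos
    obtain ⟨z₀, hz₀, h₀⟩ := hpos
    have hzero : ∀ {z : ℝ}, 0 ≤ z → A z = 0 := OrliczKorn.eq_zero_of_doubling hmono hnn
      (fun z hz => (hΔ z hz).2) hz₀ (le_antisymm h₀ (hnn _ hz₀.le))
    refine ⟨1, one_pos, fun w _ _ _ => le_of_eq ?_⟩
    have h1 : ∀ M : Matrix (Fin d) (Fin d) ℝ, A (frobNorm M) = 0 := fun M =>
      hzero (OrliczKorn.frobNorm_nonneg M)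
    simp only [one_mul, h1]
end
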